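/- arXiv:0910.1575 — 2 statements merged into one kernel-verified Lean document; each statement's English description precedes it below -/
import Mathlib

section
/- Let G be a finite simple graph with 9 vertices and 20 edges whose minimum degree is at least 3 and whose maximum degree equals 5, and suppose that any two vertices of degree 5 in G are adjacent. Then G is 2-apex. -/
/-- `H` is a minor of `G`: there are pairwise disjoint nonempty connected branch sets
in `G`, one for each vertex of `H`, with an edge of `G` between the branch sets of
any two vertices adjacent in `H`. -/
def SimpleGraph.IsMinor {W V : Type*} (H : SimpleGraph W) (G : SimpleGraph V) : Prop :=
  ∃ f : W → Set V,
    (∀ w, (f w).Nonempty) ∧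
    (∀ w, (G.induce (f w)).Connected) ∧
    (Pairwise fun w₁ w₂ => Disjoint (f w₁) (f w₂)) ∧
    ∀ ⦃w₁ w₂⦄, H.Adj w₁ w₂ → ∃ v₁ ∈ f w₁, ∃ v₂ ∈ f w₂, G.Adj v₁ v₂

/-- A graph is planar iff it has no `K₅` minor and no `K₃,₃` minor (Kuratowski–Wagner). -/
def SimpleGraph.IsPlanar {V : Type*} (G : SimpleGraph V) : Prop :=
  ¬ (⊤ : SimpleGraph (Fin 5)).IsMinor G ∧
  ¬ (completeBipartiteGraph (Fin 3) (Fin 3)).IsMinor G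

/-- A graph is 2-apex if it becomes planar after deleting at most two vertices. -/
def SimpleGraph.TwoApex {V : Type*} (G : SimpleGraph V) : Prop :=
  ∃ s : Set V, s.ncard ≤ 2 ∧ (G.induce sᶜ).IsPlanar


/-! ### What a minor on seven vertices looks like -/

theorem k33_aux {U : Type*} (H : SimpleGraph U) (P Q : Fin 3 → Set U) (a b : Fin 3 → U) (z : U)
    (ha : Function.Injective a) (hb : Function.Injective b)
    (hza : ∀ i, z ≠ a i)
    (hQ : ∀ j, Q j ⊆ {b j}) (hP : ∀ i, i ≠ 0 → P i ⊆ {a i}) (hP0 : P 0 ⊆ {a 0, z})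
    (cover : ∀ w, w = z ∨ (∃ i, w = a i) ∨ ∃ j, w = b j)
    (hE : ∀ i j, ∃ v₁ ∈ P i, ∃ v₂ ∈ Q j, H.Adj v₁ v₂)
    (hz : H.Adj (a 0) z ∨ P 0 ⊆ {a 0}) :
    ∃ x y u v p q r : U, x ≠ y ∧ u ≠ x ∧ u ≠ y ∧ v ≠ x ∧ v ≠ y ∧ v ≠ u ∧
      p ≠ q ∧ p ≠ r ∧ q ≠ r ∧ (∀ w, w = p ∨ w = q ∨ w = r → H.Adj x w ∧ H.Adj y w) ∧
      (∀ w, w ≠ x → w ≠ y → w ≠ u → w ≠ v →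
        H.Adj x w ∧ H.Adj y w ∧ (H.Adj u w ∨ H.Adj v w)) ∧
      (H.Adj u v ∨ ∀ w, w ≠ x → w ≠ y → w ≠ u → w ≠ v → H.Adj u w) := by
  have h1 : ∀ i, i ≠ 0 → ∀ j, H.Adj (a i) (b j) := by
    intro i hi j
    obtain ⟨v₁, h₁, v₂, h₂, h⟩ := hE i j
    have e1 := hP i hi h₁
    have e2 := hQ j h₂
    simp only [Set.mem_singleton_iff] at e1 e2
    rwa [e1, e2] at h
  have h0 : ∀ j, H.Adj (a 0) (b j) ∨ H.Adj z (b j) := by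
    intro j
    obtain ⟨v₁, h₁, v₂, h₂, h⟩ := hE 0 j
    have e1 := hP0 h₁
    have e2 := hQ j h₂
    simp only [Set.mem_singleton_iff, Set.mem_insert_iff] at e1 e2
    rcases e1 with e1 | e1
    · left; rwa [e1, e2] at h
    · right; rwa [e1, e2] at h
  have hw : ∀ w, w ≠ a 1 → w ≠ a 2 → w ≠ a 0 → w ≠ z → ∃ j, w = b j := by
    intro w w1 w2 w0 wz
    rcases cover w with h | ⟨i, h⟩ | h
    · exact absurd h wz
    · fin_cases i
      · exact absurd h w0
      · exact absurd h w1
      · exact absurd h w2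
    · exact h
  refine ⟨a 1, a 2, a 0, z, b 0, b 1, b 2, ha.ne (by decide), ha.ne (by decide),
    ha.ne (by decide), hza _, hza _, hza _, hb.ne (by decide), hb.ne (by decide),
    hb.ne (by decide), ?_, ?_, ?_⟩
  · rintro w (rfl | rfl | rfl) <;> exact ⟨h1 _ (by decide) _, h1 _ (by decide) _⟩
  · intro w w1 w2 w0 wz
    obtain ⟨j, rfl⟩ := hw w w1 w2 w0 wz
    exact ⟨h1 _ (by decide) _, h1 _ (by decide) _, h0 j⟩
  · rcases hz with hz | hz
    · exact Or.inl hz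
    · right
      intro w w1 w2 w0 wz
      obtain ⟨j, rfl⟩ := hw w w1 w2 w0 wz
      obtain ⟨v₁, h₁, v₂, h₂, h⟩ := hE 0 j
      have e1 := hz h₁
      have e2 := hQ j h₂
      simp only [Set.mem_singleton_iff] at e1 e2
      rwa [e1, e2] at h

theorem adj_of_connected_pair {U : Type*} (H : SimpleGraph U) (s : Set U)
    (hs : (H.induce s).Connected) (a z : U) (ha : a ∈ s) (hz : z ∈ s) (hne : a ≠ z)
    (hsub : s ⊆ {a, z}) : H.Adj a z := by
  obtain ⟨w⟩ := hs.preconnected ⟨a, ha⟩ ⟨z, hz⟩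
  cases w with
  | nil => exact absurd rfl hne
  | @cons _ v _ h p =>
    have h' : H.Adj a v.1 := h
    have := hsub v.2
    simp only [Set.mem_singleton_iff, Set.mem_insert_iff] at this
    rcases this with e | e
    · rw [e] at h'; exact absurd h' (H.loopless.irrefl _)
    · rwa [e] at h'

theorem k33_minor {U : Type*} [Fintype U] (H : SimpleGraph U) (hc : Fintype.card U = 7)
    (h : (completeBipartiteGraph (Fin 3) (Fin 3)).IsMinor H) :
    ∃ x y u v p q r : U, x ≠ y ∧ u ≠ x ∧ u ≠ y ∧ v ≠ x ∧ v ≠ y ∧ v ≠ u ∧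
      p ≠ q ∧ p ≠ r ∧ q ≠ r ∧ (∀ w, w = p ∨ w = q ∨ w = r → H.Adj x w ∧ H.Adj y w) ∧
      (∀ w, w ≠ x → w ≠ y → w ≠ u → w ≠ v →
        H.Adj x w ∧ H.Adj y w ∧ (H.Adj u w ∨ H.Adj v w)) ∧
      (H.Adj u v ∨ ∀ w, w ≠ x → w ≠ y → w ≠ u → w ≠ v → H.Adj u w) := by
  classical
  obtain ⟨f, hne, hconn, hdis, hE⟩ := h
  choose r hr using hne
  have huniq : ∀ t w w', t ∈ f w → t ∈ f w' → w = w' := by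
    intro t w w' h1 h2
    by_contra hww
    exact Set.disjoint_left.1 (hdis hww) h1 h2
  have hinj : Function.Injective r := fun w w' h => huniq (r w) w w' (hr w) (h ▸ hr w')
  have hcard : (Finset.univ.image r)ᶜ.card = 1 := by
    rw [Finset.card_compl, Finset.card_image_of_injective _ hinj, hc]
    simp
  obtain ⟨z, hz⟩ := Finset.card_eq_one.1 hcard
  have hz1 : ∀ w, z ≠ r w := by
    intro w hw
    have : z ∈ (Finset.univ.image r)ᶜ := by rw [hz]; simp
    simp [hw] at this
  have hcov : ∀ t, t = z ∨ ∃ w, t = r w := by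
    intro t
    by_cases ht : t ∈ (Finset.univ.image r)ᶜ
    · left; rw [hz] at ht; simpa using ht
    · right
      simp only [Finset.mem_compl, not_not, Finset.mem_image, Finset.mem_univ, true_and] at ht
      obtain ⟨w, hw⟩ := ht
      exact ⟨w, hw.symm⟩
  have hsub : ∀ w, f w ⊆ {r w, z} := by
    intro w t ht
    rcases hcov t with h | ⟨w', h⟩
    · simp [h]
    · have := huniq t w w' ht (h ▸ hr w')
      simp [h, this]
  have hsing : ∀ w, z ∉ f w → f w ⊆ {r w} := by
    intro w hw t ht
    rcases hsub w ht with h | h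
    · exact h
    · rw [Set.mem_singleton_iff] at h
      exact absurd (h ▸ ht) hw
  have hEl : ∀ i j, ∃ v₁ ∈ f (.inl i), ∃ v₂ ∈ f (.inr j), H.Adj v₁ v₂ := fun i j =>
    hE (by simp)
  have hEr : ∀ i j, ∃ v₁ ∈ f (.inr i), ∃ v₂ ∈ f (.inl j), H.Adj v₁ v₂ := fun i j =>
    hE (by simp)
  by_cases hex : ∃ w, z ∈ f w
  · obtain ⟨w, hw⟩ := hex
    have hadj : H.Adj (r w) z :=
      adj_of_connected_pair H (f w) (hconn w) _ _ (hr w) hw (hz1 w).symm (hsub w)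
    have hothers : ∀ w', w' ≠ w → f w' ⊆ {r w'} := fun w' h' =>
      hsing w' (fun hz' => h' (huniq z _ _ hz' hw))
    rcases w with i | i
    · refine k33_aux H (fun k => f (.inl (Equiv.swap 0 i k))) (fun j => f (.inr j))
        (fun k => r (.inl (Equiv.swap 0 i k))) (fun j => r (.inr j)) z ?_ ?_ ?_ ?_ ?_ ?_ ?_ ?_ ?_
      · exact fun k k' h => (Equiv.swap 0 i).injective (Sum.inl_injective (hinj h))
      · exact fun k k' h => Sum.inr_injective (hinj h)
      · exact fun k => hz1 _
      · exact fun j => hothers _ (by simp)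
      · intro k hk
        refine hothers _ (fun h => hk ?_)
        have := Sum.inl_injective h
        exact (Equiv.swap 0 i).injective (by simpa using this)
      · exact hsub _
      · intro t
        rcases hcov t with h | ⟨w | w, h⟩
        · exact Or.inl h
        · exact Or.inr (Or.inl ⟨Equiv.swap 0 i w, by simpa using h⟩)
        · exact Or.inr (Or.inr ⟨w, h⟩)
      · exact fun k j => hEl _ _
      · left; simpa using hadj
    · refine k33_aux H (fun k => f (.inr (Equiv.swap 0 i k))) (fun j => f (.inl j))
        (fun k => r (.inr (Equiv.swap 0 i k))) (fun j => r (.inl j)) z ?_ ?_ ?_ ?_ ?_ ?_ ?_ ?_ ?_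
      · exact fun k k' h => (Equiv.swap 0 i).injective (Sum.inr_injective (hinj h))
      · exact fun k k' h => Sum.inl_injective (hinj h)
      · exact fun k => hz1 _
      · exact fun j => hothers _ (by simp)
      · intro k hk
        refine hothers _ (fun h => hk ?_)
        have := Sum.inr_injective h
        exact (Equiv.swap 0 i).injective (by simpa using this)
      · exact hsub _
      · intro t
        rcases hcov t with h | ⟨w | w, h⟩
        · exact Or.inl h
        · exact Or.inr (Or.inr ⟨w, h⟩)
        · exact Or.inr (Or.inl ⟨Equiv.swap 0 i w, by simpa using h⟩)
      · exact fun k j => hEr _ _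
      · left; simpa using hadj
  · push Not at hex
    refine k33_aux H (fun k => f (.inl k)) (fun j => f (.inr j))
      (fun k => r (.inl k)) (fun j => r (.inr j)) z ?_ ?_ ?_ ?_ ?_ ?_ ?_ ?_ ?_
    · exact fun k k' h => Sum.inl_injective (hinj h)
    · exact fun k k' h => Sum.inr_injective (hinj h)
    · exact fun k => hz1 _
    · exact fun j => hsing _ (hex _)
    · exact fun k _ => hsing _ (hex _)
    · exact hsub _
    · intro t
      rcases hcov t with h | ⟨w | w, h⟩
      · exact Or.inl h
      · exact Or.inr (Or.inl ⟨w, h⟩)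
      · exact Or.inr (Or.inr ⟨w, h⟩)
    · exact fun k j => hEl _ _
    · right; exact hsing _ (hex _)

theorem k5_minor {U : Type*} [Fintype U] (H : SimpleGraph U) (hc : Fintype.card U = 7)
    (h : (⊤ : SimpleGraph (Fin 5)).IsMinor H) :
    ∃ t : Fin 3 → U, (∀ i j, i ≠ j → H.Adj (t i) (t j)) ∧
      ∀ i, ∃ p q, p ≠ q ∧ H.Adj (t i) p ∧ H.Adj (t i) q ∧ ∀ j, p ≠ t j ∧ q ≠ t j := by
  classical
  obtain ⟨f, hne, hconn, hdis, hE⟩ := h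
  choose r hr using hne
  have huniq : ∀ t w w', t ∈ f w → t ∈ f w' → w = w' := by
    intro t w w' h1 h2
    by_contra hww
    exact Set.disjoint_left.1 (hdis hww) h1 h2
  have hinj : Function.Injective r := fun w w' h => huniq (r w) w w' (hr w) (h ▸ hr w')
  have hcard : (Finset.univ.image r)ᶜ.card = 2 := by
    rw [Finset.card_compl, Finset.card_image_of_injective _ hinj, hc]
    simp
  have : Nonempty U := ⟨r 0⟩
  obtain ⟨B, hBm⟩ : ∃ B : Finset (Fin 5),
      ∀ w, w ∈ B ↔ ∃ z ∈ (Finset.univ.image r)ᶜ, z ∈ f w :=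
    ⟨Finset.univ.filter (fun w => ∃ z ∈ (Finset.univ.image r)ᶜ, z ∈ f w), fun w => by simp⟩
  have hB : B.card ≤ 2 := by
    rw [← hcard]
    have hB' : ∀ w ∈ B, ∃ z ∈ (Finset.univ.image r)ᶜ, z ∈ f w := fun w hw =>
      (hBm w).1 hw
    choose! g hg using hB'
    refine Finset.card_le_card_of_injOn g (fun w hw => (hg w hw).1) ?_
    intro w hw w' hw' e
    exact huniq (g w) w w' (hg w hw).2 (e ▸ (hg w' hw').2)
  have hBc : 3 ≤ Bᶜ.card := by
    rw [Finset.card_compl]; simp; omega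
  obtain ⟨S, hS, hS3⟩ := Finset.exists_subset_card_eq hBc
  have hS2 : Sᶜ.card = 2 := by rw [Finset.card_compl, hS3]; rfl
  have hsing : ∀ w ∈ S, f w ⊆ {r w} := by
    intro w hw t ht
    have hwB : w ∉ B := by simpa using hS hw
    by_cases htr : t ∈ (Finset.univ.image r)ᶜ
    · exact absurd ((hBm w).2 ⟨t, htr, ht⟩) hwB
    · simp only [Finset.mem_compl, not_not, Finset.mem_image, Finset.mem_univ, true_and] at htr
      obtain ⟨w', hw'⟩ := htr
      have := huniq t w w' ht (hw' ▸ hr w')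
      simp [← hw', this]
  obtain ⟨p, q, hpq, hSc⟩ := Finset.card_eq_two.1 hS2
  have hpS : p ∉ S := by
    have : p ∈ Sᶜ := by rw [hSc]; simp
    simpa using this
  have hqS : q ∉ S := by
    have : q ∈ Sᶜ := by rw [hSc]; simp
    simpa using this
  let o := S.orderEmbOfFin hS3
  have ho : ∀ i, o i ∈ S := fun i => Finset.orderEmbOfFin_mem S hS3 i
  have hout : ∀ i w, w ∉ S → ∃ v ∈ f w, H.Adj (r (o i)) v := by
    intro i w hw
    have hne : o i ≠ w := fun h => hw (h ▸ ho i)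
    obtain ⟨v₁, h₁, v₂, h₂, h⟩ := hE (show (⊤ : SimpleGraph (Fin 5)).Adj (o i) w from hne)
    have e1 := hsing _ (ho i) h₁
    simp only [Set.mem_singleton_iff] at e1
    exact ⟨v₂, h₂, e1 ▸ h⟩
  refine ⟨fun i => r (o i), ?_, ?_⟩
  · intro i j hij
    have hne : o i ≠ o j := o.injective.ne hij
    obtain ⟨v₁, h₁, v₂, h₂, h⟩ := hE (show (⊤ : SimpleGraph (Fin 5)).Adj (o i) (o j) from hne)
    have e1 := hsing _ (ho i) h₁
    have e2 := hsing _ (ho j) h₂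
    simp only [Set.mem_singleton_iff] at e1 e2
    rwa [e1, e2] at h
  · intro i
    obtain ⟨v, hv, hv'⟩ := hout i p hpS
    obtain ⟨w, hw, hw'⟩ := hout i q hqS
    refine ⟨v, w, fun h => hpq (huniq v p q hv (h ▸ hw)), hv', hw', fun j => ⟨?_, ?_⟩⟩
    · intro h
      exact hpS (huniq v p (o j) hv (h ▸ hr _) ▸ ho j)
    · intro h
      exact hqS (huniq w q (o j) hw (h ▸ hr _) ▸ ho j)

/-! ### Computational core: adjacency matrices coded as natural numbers (bit `9 * i + j`). -/

/-- conjunction and disjunction that the kernel evaluates fast -/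
def band (a b : Bool) : Bool := Bool.rec false b a

def bor (a b : Bool) : Bool := Bool.rec b true a

def bnot (a : Bool) : Bool := Bool.rec true false a

theorem band_eq (a b : Bool) : band a b = (a && b) := by cases a <;> rfl

theorem bor_eq (a b : Bool) : bor a b = (a || b) := by cases a <;> rfl

theorem bnot_eq (a : Bool) : bnot a = !a := by cases a <;> rfl

def anyL (l : List ℕ) (p : ℕ → Bool) : Bool :=
  List.rec false (fun h _ ih => Bool.rec ih true (p h)) l

def allL (l : List ℕ) (p : ℕ → Bool) : Bool :=
  List.rec true (fun h _ ih => Bool.rec false ih (p h)) l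

theorem anyL_iff (l : List ℕ) (p : ℕ → Bool) : anyL l p = true ↔ ∃ x ∈ l, p x = true := by
  induction l with
  | nil => simp [anyL]
  | cons h t ih =>
    have : anyL (h :: t) p = bor (p h) (anyL t p) := rfl
    simp [this, ih, bor_eq]

theorem allL_iff (l : List ℕ) (p : ℕ → Bool) : allL l p = true ↔ ∀ x ∈ l, p x = true := by
  induction l with
  | nil => simp [allL]
  | cons h t ih =>
    have : allL (h :: t) p = band (p h) (allL t p) := rfl
    simp [this, ih, band_eq]

/-- A wrapper around `b = true` with a decidability instance that the kernel evaluates fast. -/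
structure IsTrue' (b : Bool) : Prop where
  h : b = true

instance (b : Bool) : Decidable (IsTrue' b) :=
  Bool.rec (motive := fun b => Decidable (IsTrue' b))
    (isFalse (fun h => nomatch h.1)) (isTrue ⟨rfl⟩) b

/-- `f n`, arranged so that the kernel evaluates `n` first -/
def force (n : ℕ) (f : ℕ → Bool) : Bool := Nat.rec (f (nat_lit 0)) (fun m _ => f (Nat.succ m)) n

theorem force_eq (n : ℕ) (f : ℕ → Bool) : force n f = f n := by cases n <;> rfl

/-- adjacency of `i` and `j` in the coded graph `g` -/
def tb (g i j : ℕ) : Bool :=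
  Nat.beq (Nat.land (Nat.shiftRight g (Nat.add (Nat.mul (nat_lit 9) i) j)) (nat_lit 1)) (nat_lit 1)

theorem tb_eq (g i j : ℕ) : tb g i j = g.testBit (9 * i + j) := by
  have h : tb g i j = Nat.beq ((g >>> (9 * i + j)) &&& 1) 1 := rfl
  rw [h, Nat.testBit, Nat.land_comm 1, Nat.and_one_is_mod]
  rcases Nat.mod_two_eq_zero_or_one (g >>> (9 * i + j)) with h | h <;> rw [h] <;> rfl

theorem tb_or (g h i j : ℕ) : tb (Nat.lor g h) i j = (tb g i j || tb h i j) := by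
  rw [tb_eq, tb_eq, tb_eq]
  exact Nat.testBit_or ..

def ne (i j : ℕ) : Bool := bnot (Nat.beq i j)

theorem ne_iff (i j : ℕ) : ne i j = true ↔ i ≠ j := by
  unfold ne
  rw [bnot_eq]
  cases h : Nat.beq i j
  · simpa using Nat.ne_of_beq_eq_false h
  · simpa using Nat.eq_of_beq_eq_true h

/-- neighbour mask of `x` -/
def nb (g x : ℕ) : ℕ := Nat.shiftRight g (Nat.mul (nat_lit 9) x)

/-- clear the lowest bit -/
def clr (c : ℕ) : ℕ := Nat.land c (Nat.pred c)

/-- `c` has at least three bits -/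
def three (c : ℕ) : Bool := Nat.ble (nat_lit 1) (clr (clr c))

/-- `c` has at least four bits -/
def four (c : ℕ) : Bool := Nat.ble (nat_lit 1) (clr (clr (clr c)))


def bad33aux (g : ℕ) (vs : List ℕ) (x y : ℕ) : Bool :=
  anyL vs fun u => band (band (ne u x) (ne u y)) <|
  anyL vs fun v => band (band (ne v x) (band (ne v y) (ne v u))) <|
    band (allL vs fun w => bor (bor (bor (Nat.beq w x) (Nat.beq w y))
        (bor (Nat.beq w u) (Nat.beq w v)))
      (band (band (tb g x w) (tb g y w)) (bor (tb g u w) (tb g v w))))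
    (bor (tb g u v) (allL vs fun w => bor (bor (bor (Nat.beq w x) (Nat.beq w y))
        (bor (Nat.beq w u) (Nat.beq w v))) (tb g u w)))

/-- an obstruction implied by a `K₃,₃` minor on seven vertices -/
def bad33 (g : ℕ) (l : List ℕ) (m : ℕ) : Bool :=
  anyL l fun x => anyL l fun y => band (Nat.blt x y) <|
    band (three (Nat.land (Nat.land (nb g x) (nb g y)) m)) (bad33aux g l x y)

/-- an obstruction implied by a `K₅` minor on seven vertices -/
def bad5 (g : ℕ) (l : List ℕ) (m : ℕ) : Bool :=
  anyL l fun x => band (four (Nat.land (nb g x) m)) <|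
  anyL l fun y => band (band (tb g x y) (four (Nat.land (nb g y) m))) <|
  anyL l fun z => band (band (tb g x z) (tb g y z)) (four (Nat.land (nb g z) m))

def good (g : ℕ) (l : List ℕ) (m : ℕ) : Bool :=
  force g fun g => band (bnot (bad33 g l m)) (bnot (bad5 g l m))

/-- codes of the six graphs with five vertices and six edges -/
def rcodes : List ℕ := [nat_lit 69122923038,
  nat_lit 620757781022,
  nat_lit 942414350,
  nat_lit 275285547534,
  nat_lit 689477265934,
  nat_lit 964358840846]

/-- vertex `5` joined to two of the vertices `0, …, 4` -/
def rows5 : List ℕ := [nat_lit 105553116282912,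
  nat_lit 175921868832800,
  nat_lit 316663643766816,
  nat_lit 600333348765728,
  nat_lit 211106240937984,
  nat_lit 351848015872000,
  nat_lit 635517720870912,
  nat_lit 422216768421888,
  nat_lit 705886473420800,
  nat_lit 846628248354816]

/-- vertex `6` joined to two of the vertices `0, …, 4` -/
def rows6 : List ℕ := [nat_lit 54043195528478784,
  nat_lit 90071992564187200,
  nat_lit 162129595175272512,
  nat_lit 306249172707704896,
  nat_lit 108086391073701888,
  nat_lit 180143993684787200,
  nat_lit 324263571217219584,
  nat_lit 216172790720495616,
  nat_lit 360292368252928000,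
  nat_lit 432349970864013312]

/-- vertex `7` joined to two of the vertices `0, …, 4` -/
def rows7 : List ℕ := [nat_lit 27670116110564393088,
  nat_lit 46116860184307433600,
  nat_lit 83010348348872851584,
  nat_lit 156797333422624211072,
  nat_lit 55340232221162274816,
  nat_lit 92233720385727692800,
  nat_lit 166020705459479052288,
  nat_lit 110680464459470733312,
  nat_lit 184467449533222092800,
  nat_lit 221360937697787510784]

/-- vertex `8` joined to two of the vertices `0, …, 4` -/
def rows8 : List ℕ := [nat_lit 14167099448608935772416,
  nat_lit 23611832414348293177600,
  nat_lit 42501298345861166661888,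
  nat_lit 80280230226376154677504,
  nat_lit 28334198897217938522112,
  nat_lit 47223664828730812006400,
  nat_lit 85002596709245800022016,
  nat_lit 56668397794470169411584,
  nat_lit 94447329674985157427200,
  nat_lit 113336795606498030911488]

/-- edges of the `K₄` on `5, 6, 7, 8` -/
def kcode : ℕ := nat_lit 1061064228872152049254400


def vs9 : List ℕ := [nat_lit 0, nat_lit 1, nat_lit 2, nat_lit 3, nat_lit 4, nat_lit 5, nat_lit 6,
  nat_lit 7, nat_lit 8]

/-- `k` applied to the list of vertices other than `a` and `b` followed by `acc` -/
def withRest (a b : ℕ) (l acc : List ℕ) (k : List ℕ → Bool) : Bool :=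
  List.rec (motive := fun _ => List ℕ → Bool) (fun acc => k acc)
    (fun h _ ih acc => Bool.rec (ih acc) (ih (h :: acc)) (band (ne h a) (ne h b))) l acc

/-- the mask of the vertices other than `a` and `b` -/
def restm (a b : ℕ) : ℕ :=
  Nat.xor (nat_lit 511) (Nat.lor (Nat.pow (nat_lit 2) a) (Nat.pow (nat_lit 2) b))

/-- deleting `a` and `b` leaves no obstruction -/
def goodp (g a b : ℕ) : Bool :=
  withRest a b vs9 [] fun l => force (restm a b) fun m => good g l m

/-- candidates for the pair to be deleted, coded as `9 * a + b` -/
def pairs : List ℕ := [nat_lit 7, nat_lit 6, nat_lit 16, nat_lit 23, nat_lit 35,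
  nat_lit 25, nat_lit 15, nat_lit 34, nat_lit 11]

def anyPair (g : ℕ) : Bool := anyL pairs fun c => goodp g (Nat.div c (nat_lit 9)) (Nat.mod c (nat_lit 9))

/-- vertex `4` has at most one neighbour -/
def few (g : ℕ) : Bool := Nat.beq (clr (Nat.land (nb g (nat_lit 4)) (nat_lit 511))) (nat_lit 0)

def core : Bool :=
  allL rcodes fun r => allL rows5 fun x => allL rows6 fun y =>
    bor (goodp (Nat.lor (Nat.lor r kcode) (Nat.lor x y)) (nat_lit 7) (nat_lit 8)) <|
    allL rows7 fun z =>
      bor (few (Nat.lor r (Nat.lor x (Nat.lor y z)))) <|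
      bor (goodp (Nat.lor (Nat.lor r kcode) (Nat.lor x z)) (nat_lit 6) (nat_lit 8)) <|
      bor (goodp (Nat.lor (Nat.lor r kcode) (Nat.lor y z)) (nat_lit 5) (nat_lit 8)) <|
      allL rows8 fun w =>
        bor (goodp (Nat.lor (Nat.lor r kcode) (Nat.lor x w)) (nat_lit 6) (nat_lit 7)) <|
        bor (goodp (Nat.lor (Nat.lor r kcode) (Nat.lor y w)) (nat_lit 5) (nat_lit 7)) <|
        bor (goodp (Nat.lor (Nat.lor r kcode) (Nat.lor z w)) (nat_lit 5) (nat_lit 6)) <|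
        anyPair (Nat.lor (Nat.lor (Nat.lor r kcode) (Nat.lor x y)) (Nat.lor z w))

set_option maxHeartbeats 4000000 in
theorem core_true : IsTrue' core := by decide +kernel

/-! ### Soundness of the computation -/

theorem clr_one : ∀ c : Fin 512, clr c = 0 →
    ∃ i : Fin 9, ∀ k : Fin 9, Nat.testBit c k = true → k = i := by decide +kernel

theorem clr_two : ∀ c : Fin 512, clr (clr c) = 0 →
    ∃ i j : Fin 9, ∀ k : Fin 9, Nat.testBit c k = true → k = i ∨ k = j := by decide +kernel

theorem clr_three : ∀ c : Fin 512, clr (clr (clr c)) = 0 →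
    ∃ i j l : Fin 9, ∀ k : Fin 9, Nat.testBit c k = true → k = i ∨ k = j ∨ k = l := by
  decide +kernel

theorem three_of (c : ℕ) (hc : c < 512) (p q r : Fin 9) (hpq : p ≠ q) (hpr : p ≠ r) (hqr : q ≠ r)
    (hp : c.testBit p = true) (hq : c.testBit q = true) (hr : c.testBit r = true) :
    three c = true := by
  by_contra h
  have h0 : clr (clr c) = 0 := by
    by_contra h'
    exact h (Nat.ble_eq_true_of_le (Nat.one_le_iff_ne_zero.2 h'))
  obtain ⟨i, j, hij⟩ := clr_two ⟨c, hc⟩ h0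
  have h1 := hij p hp
  have h2 := hij q hq
  have h3 := hij r hr
  grind

theorem four_of (c : ℕ) (hc : c < 512) (p q r s : Fin 9) (hpq : p ≠ q) (hpr : p ≠ r) (hps : p ≠ s)
    (hqr : q ≠ r) (hqs : q ≠ s) (hrs : r ≠ s)
    (hp : c.testBit p = true) (hq : c.testBit q = true) (hr : c.testBit r = true)
    (hs : c.testBit s = true) :
    four c = true := by
  by_contra h
  have h0 : clr (clr (clr c)) = 0 := by
    by_contra h'
    exact h (Nat.ble_eq_true_of_le (Nat.one_le_iff_ne_zero.2 h'))
  obtain ⟨i, j, l, hij⟩ := clr_three ⟨c, hc⟩ h0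
  have h1 := hij p hp
  have h2 := hij q hq
  have h3 := hij r hr
  have h4 := hij s hs
  grind

theorem nb_bit (g x k : ℕ) : (nb g x).testBit k = tb g x k := by
  rw [tb_eq]
  have : nb g x = g >>> (9 * x) := rfl
  rw [this, Nat.testBit_shiftRight]

theorem withRest_eq (a b : ℕ) (k : List ℕ → Bool) (l : List ℕ) : ∀ acc : List ℕ,
    withRest a b l acc k = k ((l.filter (fun h => ne h a && ne h b)).reverse ++ acc) := by
  induction l with
  | nil => intro acc; rfl
  | cons h t ih =>
    intro acc
    have : withRest a b (h :: t) acc k =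
        Bool.rec (withRest a b t acc k) (withRest a b t (h :: acc) k) (band (ne h a) (ne h b)) := rfl
    rw [this, band_eq, List.filter_cons]
    cases (ne h a && ne h b)
    · simp [ih]
    · simp [ih]

theorem restm_spec : ∀ a b : Fin 9, restm a b < 512 ∧
    ∀ k : Fin 9, k ≠ a → k ≠ b → (restm a b).testBit k = true := by decide +kernel

theorem mem_vs9 (x : Fin 9) : (x : ℕ) ∈ vs9 := by
  revert x; decide

/-- a good pair: deleting it makes the graph planar -/
theorem goodp_sound {V : Type*} [Fintype V] (G : SimpleGraph V) (e : Fin 9 ≃ V)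
    (a b : Fin 9) (hab : a ≠ b) (g : ℕ) (hg : goodp g a b = true)
    (hA : ∀ i j : Fin 9, i ≠ a → i ≠ b → j ≠ a → j ≠ b → (G.Adj (e i) (e j) ↔ tb g i j = true)) :
    G.TwoApex := by
  classical
  obtain ⟨l, m, hl, hm, hmb, hgood⟩ : ∃ (l : List ℕ) (m : ℕ),
      (∀ x : Fin 9, x ≠ a → x ≠ b → (x : ℕ) ∈ l) ∧ m < 512 ∧
      (∀ k : Fin 9, k ≠ a → k ≠ b → m.testBit k = true) ∧
      band (bnot (bad33 g l m)) (bnot (bad5 g l m)) = true ∧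
      ∀ x ∈ l, ∃ y : Fin 9, x = y ∧ y ≠ a ∧ y ≠ b := by
    refine ⟨(vs9.filter (fun h => ne h a && ne h b)).reverse ++ [], restm a b, ?_,
      (restm_spec a b).1, (restm_spec a b).2, ?_, ?_⟩
    · intro x hxa hxb
      have h1 : (x : ℕ) ≠ a := fun h => hxa (Fin.ext h)
      have h2 : (x : ℕ) ≠ b := fun h => hxb (Fin.ext h)
      simp [mem_vs9, ne_iff, h1, h2]
    · rw [goodp, withRest_eq, force_eq, good, force_eq] at hg
      exact hg
    · intro x hx
      simp only [List.append_nil, List.mem_reverse, List.mem_filter, Bool.and_eq_true, ne_iff] at hx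
      obtain ⟨h0, h1, h2⟩ := hx
      have h9 : x < 9 := by
        simp [vs9] at h0
        omega
      exact ⟨⟨x, h9⟩, rfl, fun h => h1 (congrArg Fin.val h), fun h => h2 (congrArg Fin.val h)⟩
  obtain ⟨hgood, hl'⟩ := hgood
  rw [band_eq, bnot_eq, bnot_eq, Bool.and_eq_true, Bool.not_eq_true', Bool.not_eq_true'] at hgood
  obtain ⟨hg33, hg5⟩ := hgood
  refine ⟨{e a, e b}, (Set.ncard_insert_le _ _).trans (by simp), ?_⟩
  set s : Set V := {e a, e b} with hs
  have hcard : Fintype.card (sᶜ : Set V) = 7 := by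
    rw [Fintype.card_compl_set]
    have h1 : Fintype.card V = 9 := by rw [← Fintype.card_congr e]; simp
    have h2 : Fintype.card s = 2 := by
      rw [← Set.toFinset_card]
      simp [hs, hab]
    omega
  -- coordinates
  let n : (sᶜ : Set V) → Fin 9 := fun x => e.symm x.1
  have hna : ∀ x, n x ≠ a := by
    intro x h
    apply x.2
    have : x.1 = e a := by rw [← h]; simp [n]
    simp [hs, this]
  have hnb : ∀ x, n x ≠ b := by
    intro x h
    apply x.2
    have : x.1 = e b := by rw [← h]; simp [n]
    simp [hs, this]
  have hninj : ∀ x y, x ≠ y → n x ≠ n y := by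
    intro x y h h'
    exact h (Subtype.ext (e.symm.injective h'))
  have hnv : ∀ x y, x ≠ y → (n x : ℕ) ≠ n y := fun x y h h' => hninj x y h (Fin.ext h')
  have hadj : ∀ x y, (G.induce sᶜ).Adj x y → tb g (n x) (n y) = true := by
    intro x y h
    rw [← hA _ _ (hna x) (hnb x) (hna y) (hnb y)]
    simpa [n] using h
  have hsurj : ∀ w ∈ l, ∃ x, (n x : ℕ) = w := by
    intro w hw
    obtain ⟨y, rfl, hya, hyb⟩ := hl' w hw
    refine ⟨⟨e y, ?_⟩, ?_⟩
    · simp [hs, hya, hyb]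
    · simp [n]
  have hmem : ∀ x, (n x : ℕ) ∈ l := fun x => hl _ (hna x) (hnb x)
  refine ⟨fun h5 => ?_, fun h33 => ?_⟩
  · obtain ⟨t, ht, hpq⟩ := k5_minor _ hcard h5
    have hfour : ∀ i, four (Nat.land (nb g (n (t i))) m) = true := by
      intro i
      have key : ∀ w, (G.induce sᶜ).Adj (t i) w →
          (Nat.land (nb g (n (t i))) m).testBit (n w) = true := by
        intro w hw
        have : Nat.land (nb g (n (t i))) m = (nb g (n (t i))) &&& m := rfl
        rw [this, Nat.testBit_and, nb_bit, hadj _ _ hw, hmb _ (hna w) (hnb w)]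
        rfl
      obtain ⟨p, q, hpq, hp, hq, hne⟩ := hpq i
      obtain ⟨j, k, hij, hik, hjk⟩ : ∃ j k : Fin 3, i ≠ j ∧ i ≠ k ∧ j ≠ k := by
        clear * -
        revert i; decide
      have hjk' : t j ≠ t k := (ht j k hjk).ne
      exact four_of _ (lt_of_le_of_lt Nat.and_le_right hm) (n p) (n q) (n (t j)) (n (t k))
        (hninj _ _ hpq) (hninj _ _ (hne j).1) (hninj _ _ (hne k).1) (hninj _ _ (hne j).2)
        (hninj _ _ (hne k).2) (hninj _ _ hjk') (key _ hp) (key _ hq) (key _ (ht i j hij))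
        (key _ (ht i k hik))
    have : bad5 g l m = true := by
      simp only [bad5, anyL_iff, band_eq, Bool.and_eq_true]
      exact ⟨_, hmem (t 0), hfour 0, _, hmem (t 1), ⟨hadj _ _ (ht 0 1 (by decide)), hfour 1⟩,
        _, hmem (t 2), ⟨hadj _ _ (ht 0 2 (by decide)), hadj _ _ (ht 1 2 (by decide))⟩, hfour 2⟩
    rw [this] at hg5
    exact absurd hg5 (by decide)
  · obtain ⟨x, y, u, v, p, q, r, hxy, hux, huy, hvx, hvy, hvu, hpq, hpr, hqr, hb, hall, huv⟩ :=
      k33_minor _ hcard h33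
    -- without loss of generality `n x < n y`
    have key : ∀ x y, (n x : ℕ) < n y → u ≠ x → u ≠ y → v ≠ x → v ≠ y →
        (∀ w, w = p ∨ w = q ∨ w = r → (G.induce sᶜ).Adj x w ∧ (G.induce sᶜ).Adj y w) →
        (∀ w, w ≠ x → w ≠ y → w ≠ u → w ≠ v → (G.induce sᶜ).Adj x w ∧ (G.induce sᶜ).Adj y w ∧
          ((G.induce sᶜ).Adj u w ∨ (G.induce sᶜ).Adj v w)) →
        ((G.induce sᶜ).Adj u v ∨ ∀ w, w ≠ x → w ≠ y → w ≠ u → w ≠ v → (G.induce sᶜ).Adj u w) →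
        False := by
      intro x y hlt hux huy hvx hvy hb hall huv
      have kbit : ∀ w, (G.induce sᶜ).Adj x w ∧ (G.induce sᶜ).Adj y w →
          (Nat.land (Nat.land (nb g (n x)) (nb g (n y))) m).testBit (n w) = true := by
        intro w hw
        have : Nat.land (Nat.land (nb g (n x)) (nb g (n y))) m =
          ((nb g (n x)) &&& (nb g (n y))) &&& m := rfl
        rw [this, Nat.testBit_and, Nat.testBit_and, nb_bit, nb_bit, hadj _ _ hw.1, hadj _ _ hw.2,
          hmb _ (hna w) (hnb w)]
        rfl
      have h3 : three (Nat.land (Nat.land (nb g (n x)) (nb g (n y))) m) = true :=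
        three_of _ (lt_of_le_of_lt Nat.and_le_right hm) (n p) (n q) (n r)
          (hninj _ _ hpq) (hninj _ _ hpr) (hninj _ _ hqr) (kbit _ (hb _ (Or.inl rfl)))
          (kbit _ (hb _ (Or.inr (Or.inl rfl)))) (kbit _ (hb _ (Or.inr (Or.inr rfl))))
      have haux : bad33aux g l (n x) (n y) = true := by
        simp only [bad33aux, anyL_iff, allL_iff, band_eq, bor_eq, Bool.and_eq_true, Bool.or_eq_true,
          ne_iff, Nat.beq_eq]
        refine ⟨_, hmem u, ⟨hnv _ _ hux, hnv _ _ huy⟩, _, hmem v,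
          ⟨hnv _ _ hvx, hnv _ _ hvy, hnv _ _ hvu⟩, ?_, ?_⟩
        · intro w hw
          obtain ⟨w, rfl⟩ := hsurj w hw
          by_cases h1 : w = x
          · simp [h1]
          by_cases h2 : w = y
          · simp [h2]
          by_cases h3 : w = u
          · simp [h3]
          by_cases h4 : w = v
          · simp [h4]
          right
          obtain ⟨k1, k2, k3⟩ := hall w h1 h2 h3 h4
          exact ⟨⟨hadj _ _ k1, hadj _ _ k2⟩, k3.imp (hadj _ _) (hadj _ _)⟩
        · rcases huv with huv | huv
          · exact Or.inl (hadj _ _ huv)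
          · right
            intro w hw
            obtain ⟨w, rfl⟩ := hsurj w hw
            by_cases h1 : w = x
            · simp [h1]
            by_cases h2 : w = y
            · simp [h2]
            by_cases h3 : w = u
            · simp [h3]
            by_cases h4 : w = v
            · simp [h4]
            exact Or.inr (hadj _ _ (huv w h1 h2 h3 h4))
      have : bad33 g l m = true := by
        simp only [bad33, anyL_iff, band_eq, Bool.and_eq_true]
        exact ⟨_, hmem x, _, hmem y, Nat.ble_eq_true_of_le hlt, h3, haux⟩
      rw [this] at hg33
      exact absurd hg33 (by decide)
    rcases Nat.lt_or_gt_of_ne (hnv _ _ hxy) with hlt | hlt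
    · exact key x y hlt hux huy hvx hvy hb hall huv
    · refine key y x hlt huy hux hvy hvx (fun w hw => (hb w hw).symm) ?_ ?_
      · intro w h1 h2 h3 h4
        obtain ⟨k1, k2, k3⟩ := hall w h2 h1 h3 h4
        exact ⟨k2, k1, k3⟩
      · exact huv.imp id (fun h w h1 h2 => h w h2 h1)

/-! ### Normalizing the graph on five vertices -/

def bnum (b : Bool) : ℕ := Bool.rec (nat_lit 0) (nat_lit 1) b

def sel (b : Bool) (c : ℕ) : ℕ := Bool.rec (nat_lit 0) c b

def allB (p : Bool → Bool) : Bool := band (p false) (p true)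

theorem allB_iff (p : Bool → Bool) : allB p = true ↔ ∀ b, p b = true := by
  rw [allB, band_eq, Bool.and_eq_true]
  exact ⟨fun h b => by cases b; exacts [h.1, h.2], fun h => ⟨h _, h _⟩⟩

def eqB (a b : Bool) : Bool := Bool.rec (bnot b) b a

theorem eqB_iff (a b : Bool) : eqB a b = true ↔ a = b := by cases a <;> cases b <;> decide

def vs5 : List ℕ := [nat_lit 0, nat_lit 1, nat_lit 2, nat_lit 3, nat_lit 4]

def ed (i j : ℕ) : ℕ := 2 ^ (9 * i + j) + 2 ^ (9 * j + i)

/-- the code of a graph on five vertices -/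
def mcode (b01 b02 b03 b04 b12 b13 b14 b23 b24 b34 : Bool) : ℕ :=
  Nat.lor (sel b01 (ed 0 1)) <| Nat.lor (sel b02 (ed 0 2)) <| Nat.lor (sel b03 (ed 0 3)) <|
  Nat.lor (sel b04 (ed 0 4)) <| Nat.lor (sel b12 (ed 1 2)) <| Nat.lor (sel b13 (ed 1 3)) <|
  Nat.lor (sel b14 (ed 1 4)) <| Nat.lor (sel b23 (ed 2 3)) <| Nat.lor (sel b24 (ed 2 4)) <|
  sel b34 (ed 3 4)

def bcount (b01 b02 b03 b04 b12 b13 b14 b23 b24 b34 : Bool) : ℕ :=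
  Nat.add (bnum b01) <| Nat.add (bnum b02) <| Nat.add (bnum b03) <| Nat.add (bnum b04) <|
  Nat.add (bnum b12) <| Nat.add (bnum b13) <| Nat.add (bnum b14) <| Nat.add (bnum b23) <|
  Nat.add (bnum b24) (bnum b34)

/-- some relabelling of `m` is one of the six normal forms -/
def isoc (m : ℕ) : Bool :=
  anyL rcodes fun c => anyL vs5 fun s =>
  anyL vs5 fun t => band (band (ne s t) (eqB (tb m s t) (tb c (nat_lit 0) (nat_lit 1)))) <|
  anyL vs5 fun u => band (band (band (ne s u) (ne t u))
    (band (eqB (tb m s u) (tb c (nat_lit 0) (nat_lit 2)))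
      (eqB (tb m t u) (tb c (nat_lit 1) (nat_lit 2))))) <|
  anyL vs5 fun v => band (band (band (ne s v) (band (ne t v) (ne u v)))
    (band (eqB (tb m s v) (tb c (nat_lit 0) (nat_lit 3)))
      (band (eqB (tb m t v) (tb c (nat_lit 1) (nat_lit 3)))
        (eqB (tb m u v) (tb c (nat_lit 2) (nat_lit 3)))))) <|
  anyL vs5 fun w => band (band (ne s w) (band (ne t w) (band (ne u w) (ne v w))))
    (band (band (eqB (tb m s w) (tb c (nat_lit 0) (nat_lit 4)))
      (eqB (tb m t w) (tb c (nat_lit 1) (nat_lit 4))))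
      (band (eqB (tb m u w) (tb c (nat_lit 2) (nat_lit 4)))
        (eqB (tb m v w) (tb c (nat_lit 3) (nat_lit 4)))))

def isoAll : Bool :=
  allB fun b0 => allB fun b1 => allB fun b2 => allB fun b3 => allB fun b4 => allB fun b5 =>
  allB fun b6 => allB fun b7 => allB fun b8 => allB fun b9 =>
    bor (bnot (Nat.beq (bcount b0 b1 b2 b3 b4 b5 b6 b7 b8 b9) (nat_lit 6)))
      (force (mcode b0 b1 b2 b3 b4 b5 b6 b7 b8 b9) isoc)

set_option maxHeartbeats 4000000 in
theorem isoAll_true : IsTrue' isoAll := by decide +kernel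

theorem tb_sel (b : Bool) (c i j : ℕ) : tb (sel b c) i j = (tb c i j && b) := by
  cases b
  · have : sel false c = 0 := rfl
    rw [this, tb_eq]; simp
  · have : sel true c = c := rfl
    rw [this]; simp

set_option maxHeartbeats 1000000 in
theorem mcode_spec (B : Fin 5 → Fin 5 → Bool) (hs : ∀ i j, B i j = B j i) (hi : ∀ i, B i i = false)
    (i j : Fin 5) : tb (mcode (B 0 1) (B 0 2) (B 0 3) (B 0 4) (B 1 2) (B 1 3) (B 1 4) (B 2 3)
      (B 2 4) (B 3 4)) i j = B i j := by
  simp only [mcode, tb_or, tb_sel]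
  simp only [tb_eq, ed]
  fin_cases i <;> fin_cases j <;> simp [hi, Nat.testBit, Nat.shiftRight_eq_div_pow] <;>
    exact hs _ _

theorem rcodes_spec : ∀ c ∈ rcodes, (∀ i j : Fin 9, tb c i j = tb c j i) ∧
    (∀ i : Fin 9, tb c i i = false) ∧ ∀ i j : Fin 9, (5 ≤ i ∨ 5 ≤ j) → tb c i j = false := by
  decide +kernel

theorem vs5_mem : ∀ n ∈ vs5, ∃ i : Fin 5, (i : ℕ) = n := by decide +kernel

theorem iso_exists (B : Fin 5 → Fin 5 → Bool) (hs : ∀ i j, B i j = B j i)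
    (hi : ∀ i, B i i = false)
    (hc : bcount (B 0 1) (B 0 2) (B 0 3) (B 0 4) (B 1 2) (B 1 3) (B 1 4) (B 2 3)
      (B 2 4) (B 3 4) = 6) :
    ∃ c ∈ rcodes, ∃ p : Fin 5 → Fin 5, Function.Injective p ∧
      ∀ i j : Fin 5, tb c i j = B (p i) (p j) := by
  have h := isoAll_true.h
  simp only [isoAll, allB_iff] at h
  have h := h (B 0 1) (B 0 2) (B 0 3) (B 0 4) (B 1 2) (B 1 3) (B 1 4) (B 2 3) (B 2 4) (B 3 4)
  have hn : Nat.beq 6 6 = true := rfl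
  rw [hc, hn, bor_eq, bnot_eq, force_eq] at h
  simp only [Bool.not_true, Bool.false_or] at h
  have hm := mcode_spec B hs hi
  generalize mcode (B 0 1) (B 0 2) (B 0 3) (B 0 4) (B 1 2) (B 1 3) (B 1 4) (B 2 3) (B 2 4) (B 3 4)
    = m at h hm
  simp only [isoc, anyL_iff, band_eq, Bool.and_eq_true, eqB_iff, ne_iff] at h
  obtain ⟨c, hcm, s, hs5, t, ht5, ⟨hst, e01⟩, u, hu5, ⟨⟨hsu, htu⟩, e02, e12⟩, v, hv5,
    ⟨⟨hsv, htv, huv⟩, e03, e13, e23⟩, w, hw5, ⟨hsw, htw, huw, hvw⟩, ⟨e04, e14⟩, e24, e34⟩ := h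
  obtain ⟨s, rfl⟩ := vs5_mem s hs5
  obtain ⟨t, rfl⟩ := vs5_mem t ht5
  obtain ⟨u, rfl⟩ := vs5_mem u hu5
  obtain ⟨v, rfl⟩ := vs5_mem v hv5
  obtain ⟨w, rfl⟩ := vs5_mem w hw5
  rw [hm] at e01 e02 e12 e03 e13 e23 e04 e14 e24 e34
  obtain ⟨r1, r2, -⟩ := rcodes_spec c hcm
  refine ⟨c, hcm, ![s, t, u, v, w], ?_, ?_⟩
  · intro i j hij
    by_contra hne
    revert hij
    have hst' := Fin.val_ne_iff.1 hst
    have hsu' := Fin.val_ne_iff.1 hsu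
    have htu' := Fin.val_ne_iff.1 htu
    have hsv' := Fin.val_ne_iff.1 hsv
    have htv' := Fin.val_ne_iff.1 htv
    have huv' := Fin.val_ne_iff.1 huv
    have hsw' := Fin.val_ne_iff.1 hsw
    have htw' := Fin.val_ne_iff.1 htw
    have huw' := Fin.val_ne_iff.1 huw
    have hvw' := Fin.val_ne_iff.1 hvw
    fin_cases i <;> fin_cases j <;>
      first
        | exact absurd rfl hne
        | (simp only; first | assumption | (apply Ne.symm; assumption))
  · have key : ∀ i j : Fin 5, i < j → tb c i j = B (![s, t, u, v, w] i) (![s, t, u, v, w] j) := by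
      intro i j hij
      fin_cases i <;> fin_cases j <;>
        first
          | exact absurd hij (by decide)
          | (symm; assumption)
    intro i j
    rcases lt_trichotomy i j with h | h | h
    · exact key i j h
    · subst h
      rw [hi]
      exact r2 ⟨i, by omega⟩
    · rw [hs, ← key j i h]
      exact r1 ⟨i, by omega⟩ ⟨j, by omega⟩

/-! ### Assembling -/

theorem kcode_spec : ∀ a b : Fin 9, tb kcode a b = decide (5 ≤ a ∧ 5 ≤ b ∧ a ≠ b) := by
  decide +kernel

/-- a row specification: `c` codes the edges from `i` to the vertices `0, …, 4` -/
def rowAt (i : Fin 9) (f : Fin 9 → Bool) (a b : Fin 9) : Bool :=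
  (decide (a = i ∧ b < 5) && f b) || (decide (b = i ∧ a < 5) && f a)

theorem rows5_spec : ∀ b0 b1 b2 b3 b4 : Bool,
    b0.toNat + b1.toNat + b2.toNat + b3.toNat + b4.toNat = 2 → ∃ c ∈ rows5, ∀ a b : Fin 9,
      tb c a b = rowAt 5 ![b0, b1, b2, b3, b4, false, false, false, false] a b := by
  decide +kernel

theorem rows6_spec : ∀ b0 b1 b2 b3 b4 : Bool,
    b0.toNat + b1.toNat + b2.toNat + b3.toNat + b4.toNat = 2 → ∃ c ∈ rows6, ∀ a b : Fin 9,
      tb c a b = rowAt 6 ![b0, b1, b2, b3, b4, false, false, false, false] a b := by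
  decide +kernel

theorem rows7_spec : ∀ b0 b1 b2 b3 b4 : Bool,
    b0.toNat + b1.toNat + b2.toNat + b3.toNat + b4.toNat = 2 → ∃ c ∈ rows7, ∀ a b : Fin 9,
      tb c a b = rowAt 7 ![b0, b1, b2, b3, b4, false, false, false, false] a b := by
  decide +kernel

theorem rows8_spec : ∀ b0 b1 b2 b3 b4 : Bool,
    b0.toNat + b1.toNat + b2.toNat + b3.toNat + b4.toNat = 2 → ∃ c ∈ rows8, ∀ a b : Fin 9,
      tb c a b = rowAt 8 ![b0, b1, b2, b3, b4, false, false, false, false] a b := by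
  decide +kernel

/-- the edges between `i` and the vertices `0, …, 4` -/
def cross (i a b : Fin 9) : Bool := decide (a = i ∧ b < 5 ∨ b = i ∧ a < 5)

theorem row_exists (A : Fin 9 → Fin 9 → Bool) (hs : ∀ i j, A i j = A j i) (i : Fin 9)
    (rows : List ℕ)
    (hspec : ∀ b0 b1 b2 b3 b4 : Bool,
      b0.toNat + b1.toNat + b2.toNat + b3.toNat + b4.toNat = 2 → ∃ c ∈ rows, ∀ a b : Fin 9,
      tb c a b = rowAt i ![b0, b1, b2, b3, b4, false, false, false, false] a b)
    (h2 : (A i 0).toNat + (A i 1).toNat + (A i 2).toNat + (A i 3).toNat + (A i 4).toNat = 2) :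
    ∃ c ∈ rows, ∀ a b : Fin 9, tb c a b = (A a b && cross i a b) := by
  obtain ⟨c, hc, h⟩ := hspec _ _ _ _ _ h2
  refine ⟨c, hc, fun a b => ?_⟩
  have hv : ∀ k : Fin 9, k < 5 →
      ![A i 0, A i 1, A i 2, A i 3, A i 4, false, false, false, false] k = A i k := by
    intro k hk
    fin_cases k <;> first | rfl | exact absurd hk (by decide)
  rw [h, rowAt, cross]
  by_cases h1 : a = i ∧ b < 5
  · obtain ⟨rfl, hb⟩ := h1
    by_cases h3 : b = a ∧ a < 5
    · obtain ⟨rfl, ha⟩ := h3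
      simp [hb, hv b hb]
    · simp [hb, h3, hv b hb]
  · by_cases h3 : b = i ∧ a < 5
    · obtain ⟨rfl, ha⟩ := h3
      simp [ha, h1, hv a ha, hs b a]
    · simp [h1, h3]

theorem pairs_spec : ∀ c ∈ pairs, ∃ a b : Fin 9, a ≠ b ∧ (a : ℕ) = Nat.div c (nat_lit 9) ∧
    (b : ℕ) = Nat.mod c (nat_lit 9) := by decide +kernel

theorem cover78 : ∀ i j : Fin 9, i ≠ 7 → i ≠ 8 → j ≠ 7 → j ≠ 8 →
    ((decide (i < 5 ∧ j < 5) || decide (5 ≤ i ∧ 5 ≤ j)) || (cross 5 i j || cross 6 i j)) = true := by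
  decide +kernel
theorem cover68 : ∀ i j : Fin 9, i ≠ 6 → i ≠ 8 → j ≠ 6 → j ≠ 8 →
    ((decide (i < 5 ∧ j < 5) || decide (5 ≤ i ∧ 5 ≤ j)) || (cross 5 i j || cross 7 i j)) = true := by
  decide +kernel
theorem cover58 : ∀ i j : Fin 9, i ≠ 5 → i ≠ 8 → j ≠ 5 → j ≠ 8 →
    ((decide (i < 5 ∧ j < 5) || decide (5 ≤ i ∧ 5 ≤ j)) || (cross 6 i j || cross 7 i j)) = true := by
  decide +kernel
theorem cover67 : ∀ i j : Fin 9, i ≠ 6 → i ≠ 7 → j ≠ 6 → j ≠ 7 →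
    ((decide (i < 5 ∧ j < 5) || decide (5 ≤ i ∧ 5 ≤ j)) || (cross 5 i j || cross 8 i j)) = true := by
  decide +kernel
theorem cover57 : ∀ i j : Fin 9, i ≠ 5 → i ≠ 7 → j ≠ 5 → j ≠ 7 →
    ((decide (i < 5 ∧ j < 5) || decide (5 ≤ i ∧ 5 ≤ j)) || (cross 6 i j || cross 8 i j)) = true := by
  decide +kernel
theorem cover56 : ∀ i j : Fin 9, i ≠ 5 → i ≠ 6 → j ≠ 5 → j ≠ 6 →
    ((decide (i < 5 ∧ j < 5) || decide (5 ≤ i ∧ 5 ≤ j)) || (cross 7 i j || cross 8 i j)) = true := by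
  decide +kernel
theorem coverAll : ∀ i j : Fin 9,
    (((decide (i < 5 ∧ j < 5) || decide (5 ≤ i ∧ 5 ≤ j)) || (cross 5 i j || cross 6 i j)) ||
      (cross 7 i j || cross 8 i j)) = true := by
  decide +kernel
theorem cover4 : ∀ j : Fin 9, j ≠ 8 →
    (decide ((4 : Fin 9) < 5 ∧ j < 5) || (cross 5 4 j || (cross 6 4 j || cross 7 4 j))) = true := by
  decide +kernel

theorem assemble {V : Type*} [Fintype V] (G : SimpleGraph V) (e : Fin 9 ≃ V)
    (A : Fin 9 → Fin 9 → Bool) (hA : ∀ i j, G.Adj (e i) (e j) ↔ A i j = true)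
    (hs : ∀ i j, A i j = A j i) (hi : ∀ i, A i i = false)
    (hK : ∀ i j, 5 ≤ i → 5 ≤ j → i ≠ j → A i j = true)
    (h2 : ∀ i, 5 ≤ i →
      (A i 0).toNat + (A i 1).toNat + (A i 2).toNat + (A i 3).toNat + (A i 4).toNat = 2)
    (h4 : ∀ p q : Fin 9, ∃ k, A 4 k = true ∧ k ≠ p ∧ k ≠ q)
    (r : ℕ) (hr : r ∈ rcodes) (hrA : ∀ i j : Fin 9, i < 5 → j < 5 → tb r i j = A i j) :
    G.TwoApex := by
  have kr : ∀ a b : Fin 9, tb r a b = (A a b && decide (a < 5 ∧ b < 5)) := by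
    intro a b
    by_cases h : a < 5 ∧ b < 5
    · simp [h, hrA a b h.1 h.2]
    · rw [(rcodes_spec r hr).2.2 a b (by omega)]
      simp [h]
  have kk : ∀ a b : Fin 9, tb kcode a b = (A a b && decide (5 ≤ a ∧ 5 ≤ b)) := by
    intro a b
    rw [kcode_spec]
    by_cases h : 5 ≤ a ∧ 5 ≤ b
    · by_cases hab : a = b
      · subst hab; simp [hi]
      · simp [h, hab, hK a b h.1 h.2 hab]
    · have : ¬ (5 ≤ a ∧ 5 ≤ b ∧ a ≠ b) := fun h' => h ⟨h'.1, h'.2.1⟩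
      simp only [h, this, decide_false, Bool.and_false]
  obtain ⟨x, hx, kx⟩ := row_exists A hs 5 rows5 rows5_spec (h2 5 (by decide))
  obtain ⟨y, hy, ky⟩ := row_exists A hs 6 rows6 rows6_spec (h2 6 (by decide))
  obtain ⟨z, hz, kz⟩ := row_exists A hs 7 rows7 rows7_spec (h2 7 (by decide))
  obtain ⟨w, hw, kw⟩ := row_exists A hs 8 rows8 rows8_spec (h2 8 (by decide))
  have h := core_true.h
  simp only [core, allL_iff, bor_eq, Bool.or_eq_true] at h
  rcases h r hr x hx y hy with h | h
  · refine goodp_sound G e 7 8 (by decide) _ h fun i j h1 h3 h5 h6 => ?_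
    rw [hA, tb_or, tb_or, tb_or, kr, kk, kx, ky, ← Bool.and_or_distrib_left,
      ← Bool.and_or_distrib_left, ← Bool.and_or_distrib_left, cover78 i j h1 h3 h5 h6, Bool.and_true]
  rcases h z hz with h | h | h | h
  · exfalso
    have h0 := Nat.eq_of_beq_eq_true h
    have hlt : Nat.land (nb (Nat.lor r (Nat.lor x (Nat.lor y z))) (nat_lit 4)) (nat_lit 511) < 512 :=
      lt_of_le_of_lt (Nat.and_le_right) (by norm_num)
    obtain ⟨p, hp⟩ := clr_one ⟨_, hlt⟩ h0
    obtain ⟨k, hk, hkp, hk8⟩ := h4 p 8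
    refine hkp (hp k ?_)
    have h511 : ∀ k : Fin 9, Nat.testBit 511 k = true := by decide
    have : Nat.testBit (Nat.land (nb (Nat.lor r (Nat.lor x (Nat.lor y z))) (nat_lit 4)) (nat_lit 511)) k
      = (Nat.testBit (nb (Nat.lor r (Nat.lor x (Nat.lor y z))) 4) k && Nat.testBit 511 k) :=
      Nat.testBit_and ..
    have e4 : tb (Nat.lor r (Nat.lor x (Nat.lor y z))) 4 k = true := by
      have q := cover4 k hk8
      have : tb (Nat.lor r (Nat.lor x (Nat.lor y z))) (4 : Fin 9) k = true := by
        rw [tb_or, tb_or, tb_or, kr, kx, ky, kz, ← Bool.and_or_distrib_left,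
          ← Bool.and_or_distrib_left, ← Bool.and_or_distrib_left, q, hk]
        rfl
      exact this
    rw [h511, nb_bit, e4] at this
    exact this
  · refine goodp_sound G e 6 8 (by decide) _ h fun i j h1 h3 h5 h6 => ?_
    rw [hA, tb_or, tb_or, tb_or, kr, kk, kx, kz, ← Bool.and_or_distrib_left,
      ← Bool.and_or_distrib_left, ← Bool.and_or_distrib_left, cover68 i j h1 h3 h5 h6, Bool.and_true]
  · refine goodp_sound G e 5 8 (by decide) _ h fun i j h1 h3 h5 h6 => ?_
    rw [hA, tb_or, tb_or, tb_or, kr, kk, ky, kz, ← Bool.and_or_distrib_left,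
      ← Bool.and_or_distrib_left, ← Bool.and_or_distrib_left, cover58 i j h1 h3 h5 h6, Bool.and_true]
  rcases h w hw with h | h | h | h
  · refine goodp_sound G e 6 7 (by decide) _ h fun i j h1 h3 h5 h6 => ?_
    rw [hA, tb_or, tb_or, tb_or, kr, kk, kx, kw, ← Bool.and_or_distrib_left,
      ← Bool.and_or_distrib_left, ← Bool.and_or_distrib_left, cover67 i j h1 h3 h5 h6, Bool.and_true]
  · refine goodp_sound G e 5 7 (by decide) _ h fun i j h1 h3 h5 h6 => ?_
    rw [hA, tb_or, tb_or, tb_or, kr, kk, ky, kw, ← Bool.and_or_distrib_left,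
      ← Bool.and_or_distrib_left, ← Bool.and_or_distrib_left, cover57 i j h1 h3 h5 h6, Bool.and_true]
  · refine goodp_sound G e 5 6 (by decide) _ h fun i j h1 h3 h5 h6 => ?_
    rw [hA, tb_or, tb_or, tb_or, kr, kk, kz, kw, ← Bool.and_or_distrib_left,
      ← Bool.and_or_distrib_left, ← Bool.and_or_distrib_left, cover56 i j h1 h3 h5 h6, Bool.and_true]
  · simp only [anyPair, anyL_iff] at h
    obtain ⟨c, hc, h⟩ := h
    obtain ⟨a, b, hab, ha, hb⟩ := pairs_spec c hc
    rw [← ha, ← hb] at h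
    refine goodp_sound G e a b hab _ h fun i j _ _ _ _ => ?_
    rw [hA, tb_or, tb_or, tb_or, tb_or, tb_or, kr, kk, kx, ky, kz, kw]
    simp only [← Bool.and_or_distrib_left]
    rw [coverAll i j, Bool.and_true]

/-! ### The main argument -/

open scoped Classical in
theorem degree_sum {V : Type*} [Fintype V] (G : SimpleGraph V) (e : Fin 9 ≃ V) (i : Fin 9) :
    (G.neighborSet (e i)).ncard = ∑ j, (decide (G.Adj (e i) (e j))).toNat := by
  have h : G.neighborSet (e i) = ((Finset.univ.filter fun v => G.Adj (e i) v : Finset V) : Set V) := by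
    ext v; simp
  rw [h, Set.ncard_coe_finset, Finset.card_filter, ← Equiv.sum_comp e]
  refine Finset.sum_congr rfl fun j _ => ?_
  by_cases hj : G.Adj (e i) (e j) <;> simp [hj]

open scoped Classical in
theorem total_sum {V : Type*} [Fintype V] (G : SimpleGraph V) (hE : G.edgeSet.ncard = 20) :
    ∑ v, (G.neighborSet v).ncard = 40 := by
  have h := G.sum_degrees_eq_twice_card_edges
  have h1 : G.edgeFinset.card = 20 := by
    rw [← hE, ← SimpleGraph.coe_edgeFinset, Set.ncard_coe_finset]
  rw [h1] at h
  rw [← Nat.mul_comm 20 2] at h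
  refine Eq.trans (Finset.sum_congr rfl fun v _ => ?_) h
  rw [← SimpleGraph.card_neighborFinset_eq_degree]
  exact Set.ncard_eq_toFinset_card' _

theorem facts (A : Fin 9 → Fin 9 → Bool)
    (hs : ∀ i j, A i j = A j i) (hi : ∀ i, A i i = false)
    (hK : ∀ i j, 5 ≤ i → 5 ≤ j → i ≠ j → A i j = true)
    (h5 : ∀ i, 5 ≤ i → ∑ j, (A i j).toNat = 5)
    (ht : ∑ i, ∑ j, (A i j).toNat = 40) :
    (∀ i, 5 ≤ i →
      (A i 0).toNat + (A i 1).toNat + (A i 2).toNat + (A i 3).toNat + (A i 4).toNat = 2) ∧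
    (A 0 1).toNat + (A 0 2).toNat + (A 0 3).toNat + (A 0 4).toNat + (A 1 2).toNat + (A 1 3).toNat +
      (A 1 4).toNat + (A 2 3).toNat + (A 2 4).toNat + (A 3 4).toNat = 6 := by
  have hsum : ∀ f : Fin 9 → ℕ, ∑ j, f j = f 0 + f 1 + f 2 + f 3 + f 4 + f 5 + f 6 + f 7 + f 8 := by
    intro f
    simp [Fin.sum_univ_succ]
    ring_nf
  have k1 : ∀ i, 5 ≤ i →
      (A i 0).toNat + (A i 1).toNat + (A i 2).toNat + (A i 3).toNat + (A i 4).toNat = 2 := by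
    intro i h
    have h' := h5 i h
    rw [hsum] at h'
    have e1 : (A i 5).toNat + (A i 6).toNat + (A i 7).toNat + (A i 8).toNat = 3 := by
      have q : i = 5 ∨ i = 6 ∨ i = 7 ∨ i = 8 := by omega
      rcases q with rfl | rfl | rfl | rfl
      · rw [hi, hK 5 6, hK 5 7, hK 5 8] <;> decide
      · rw [hi, hK 6 5, hK 6 7, hK 6 8] <;> decide
      · rw [hi, hK 7 5, hK 7 6, hK 7 8] <;> decide
      · rw [hi, hK 8 5, hK 8 6, hK 8 7] <;> decide
    omega
  refine ⟨k1, ?_⟩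
  rw [hsum, h5 5 (by decide), h5 6 (by decide), h5 7 (by decide), h5 8 (by decide)] at ht
  simp only [hsum] at ht
  have a5 := k1 5 (by decide)
  have a6 := k1 6 (by decide)
  have a7 := k1 7 (by decide)
  have a8 := k1 8 (by decide)
  rw [hs 5 0, hs 5 1, hs 5 2, hs 5 3, hs 5 4] at a5
  rw [hs 6 0, hs 6 1, hs 6 2, hs 6 3, hs 6 4] at a6
  rw [hs 7 0, hs 7 1, hs 7 2, hs 7 3, hs 7 4] at a7
  rw [hs 8 0, hs 8 1, hs 8 2, hs 8 3, hs 8 4] at a8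
  rw [hs 1 0, hs 2 0, hs 3 0, hs 4 0, hs 2 1, hs 3 1, hs 4 1, hs 3 2, hs 4 2, hs 4 3] at ht
  simp only [hi, Bool.toNat_false] at ht
  omega

/-- combine a bijection on `Fin 5` with one on `Fin 4` -/
def glue {α : Type*} (P : α → Prop) [DecidablePred P] (f : Fin 5 ≃ {v // ¬ P v})
    (g : Fin 4 ≃ {v // P v}) : Fin 9 ≃ α :=
  (finSumFinEquiv (m := 5) (n := 4)).symm.trans
    ((Equiv.sumCongr f g).trans ((Equiv.sumComm _ _).trans (Equiv.sumCompl P)))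

theorem glue_high {α : Type*} (P : α → Prop) [DecidablePred P] (f : Fin 5 ≃ {v // ¬ P v})
    (g : Fin 4 ≃ {v // P v}) (i : Fin 9) (h : 5 ≤ i) : P (glue P f g i) := by
  obtain ⟨k, rfl⟩ : ∃ k : Fin 4, i = Fin.natAdd 5 k :=
    ⟨⟨i - 5, by omega⟩, by ext; simp; omega⟩
  have : glue P f g (Fin.natAdd 5 k) = (g k : α) := by
    exact congrArg (fun s => (Equiv.sumCompl P) ((Equiv.sumComm _ _) ((Equiv.sumCongr f g) s)))
      (finSumFinEquiv_symm_apply_natAdd (m := 5) k)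
  rw [this]
  exact (g k).2

/-- relabel the vertices `0, …, 4` -/
theorem relabel (p : Fin 5 → Fin 5) (hp : Function.Injective p) :
    ∃ σ : Fin 9 ≃ Fin 9, (∀ i : Fin 9, 5 ≤ i → σ i = i) ∧
      ∀ i : Fin 5, σ (Fin.castAdd 4 i) = Fin.castAdd 4 (p i) := by
  let q : Fin 5 ≃ Fin 5 := Equiv.ofBijective p (Finite.injective_iff_bijective.1 hp)
  refine ⟨(finSumFinEquiv (m := 5) (n := 4)).symm.trans
    ((Equiv.sumCongr q (Equiv.refl (Fin 4))).trans (finSumFinEquiv (m := 5) (n := 4))), ?_, ?_⟩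
  · intro i h
    obtain ⟨k, rfl⟩ : ∃ k : Fin 4, i = Fin.natAdd 5 k :=
      ⟨⟨i - 5, by omega⟩, by ext; simp; omega⟩
    exact congrArg (fun s => finSumFinEquiv (m := 5) (n := 4)
      ((Equiv.sumCongr q (Equiv.refl (Fin 4))) s)) (finSumFinEquiv_symm_apply_natAdd (m := 5) k)
  · intro i
    exact congrArg (fun s => finSumFinEquiv (m := 5) (n := 4)
      ((Equiv.sumCongr q (Equiv.refl (Fin 4))) s)) (finSumFinEquiv_symm_apply_castAdd (n := 4) i)


/-- A graph with 9 vertices, 20 edges, minimum degree at least 3, maximum degree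
equal to 5, in which all degree-5 vertices are mutually adjacent, is 2-apex. -/
theorem stmt11 {V : Type*} [Fintype V] (G : SimpleGraph V)
    (hV : Fintype.card V = 9) (hE : G.edgeSet.ncard = 20)
    (hmin : ∀ v : V, 3 ≤ (G.neighborSet v).ncard)
    (hmax : ∀ v : V, (G.neighborSet v).ncard ≤ 5)
    (hmax5 : ∃ v : V, (G.neighborSet v).ncard = 5)
    (hadj : ∀ v w : V, v ≠ w → (G.neighborSet v).ncard = 5 →
      (G.neighborSet w).ncard = 5 → G.Adj v w) :
    G.TwoApex := by
  classical
  have hT := total_sum G hE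
  obtain ⟨T, hTS, hT4⟩ : ∃ T ⊆ (Finset.univ.filter fun v => (G.neighborSet v).ncard = 5),
      T.card = 4 := by
    apply Finset.exists_subset_card_eq
    have h1 : ∑ v, (G.neighborSet v).ncard ≤
        ∑ v : V, (4 + if (G.neighborSet v).ncard = 5 then 1 else 0) := by
      refine Finset.sum_le_sum fun v _ => ?_
      have := hmax v
      split_ifs <;> omega
    rw [Finset.sum_add_distrib, ← Finset.card_filter, hT, Finset.sum_const, Finset.card_univ, hV,
      smul_eq_mul] at h1
    omega
  have c1 : Fintype.card {v // v ∈ T} = 4 := by rw [Fintype.card_coe, hT4]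
  have c2 : Fintype.card {v // ¬ v ∈ T} = 5 := by
    rw [Fintype.card_subtype_compl, hV, c1]
  let e : Fin 9 ≃ V := glue (fun v => v ∈ T) (Fintype.equivFinOfCardEq c2).symm
    (Fintype.equivFinOfCardEq c1).symm
  have he : ∀ i : Fin 9, 5 ≤ i → (G.neighborSet (e i)).ncard = 5 := by
    intro i h
    have := hTS (glue_high (fun v => v ∈ T) (Fintype.equivFinOfCardEq c2).symm
      (Fintype.equivFinOfCardEq c1).symm i h)
    simpa using this
  have F : ∀ e : Fin 9 ≃ V, (∀ i : Fin 9, 5 ≤ i → (G.neighborSet (e i)).ncard = 5) →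
      (∀ i j : Fin 9, 5 ≤ i → 5 ≤ j → i ≠ j → decide (G.Adj (e i) (e j)) = true) ∧ _ :=
    fun e he =>
      have hK : ∀ i j : Fin 9, 5 ≤ i → 5 ≤ j → i ≠ j → decide (G.Adj (e i) (e j)) = true :=
        fun i j hi hj hij =>
          decide_eq_true (hadj _ _ (fun h => hij (e.injective h)) (he i hi) (he j hj))
      ⟨hK, facts (fun i j => decide (G.Adj (e i) (e j)))
        (fun i j => decide_eq_decide.2 (G.adj_comm _ _)) (fun i => by simp) hK
        (fun i h => by rw [← degree_sum, he i h])
        (by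
          rw [← hT, ← Equiv.sum_comp e]
          exact Finset.sum_congr rfl fun i _ => (degree_sum G e i).symm)⟩
  obtain ⟨-, -, h6⟩ := F e he
  obtain ⟨c, hc, p, hp, hcp⟩ := iso_exists
    (fun i j => decide (G.Adj (e (Fin.castAdd 4 i)) (e (Fin.castAdd 4 j))))
    (fun i j => decide_eq_decide.2 (G.adj_comm _ _)) (fun i => by simp) (by
      have hb : ∀ b, bnum b = b.toNat := by intro b; cases b <;> rfl
      simp only [bcount, hb]
      refine Eq.trans ?_ h6
      simp only [Nat.add_eq, add_assoc]
      rfl)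
  obtain ⟨σ, hσ, hσp⟩ := relabel p hp
  have he' : ∀ i : Fin 9, 5 ≤ i → (G.neighborSet ((σ.trans e) i)).ncard = 5 := by
    intro i h
    rw [Equiv.trans_apply, hσ i h, he i h]
  obtain ⟨hK, h2, -⟩ := F (σ.trans e) he'
  refine assemble G (σ.trans e) (fun i j => decide (G.Adj ((σ.trans e) i) ((σ.trans e) j)))
    (fun i j => decide_eq_true_iff.symm) (fun i j => decide_eq_decide.2 (G.adj_comm _ _)) (fun i => by simp) hK h2 ?_ c hc ?_
  · intro a b
    have h3 := hmin ((σ.trans e) 4)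
    have h4 : (({(σ.trans e) a, (σ.trans e) b} : Set V)).ncard ≤ 2 := by
      refine (Set.ncard_insert_le _ _).trans ?_
      rw [Set.ncard_singleton]
    obtain ⟨v, hv, hv'⟩ := Set.exists_mem_notMem_of_ncard_lt_ncard
      (lt_of_le_of_lt h4 (Nat.lt_of_lt_of_le (by norm_num) h3)) (Set.toFinite _)
    obtain ⟨k, rfl⟩ := (σ.trans e).surjective v
    refine ⟨k, decide_eq_true hv, ?_, ?_⟩
    · rintro rfl; simp at hv'
    · rintro rfl; simp at hv'
  · intro i j h1 h3
    obtain ⟨i, rfl⟩ : ∃ k : Fin 5, i = Fin.castAdd 4 k := ⟨⟨i, by omega⟩, rfl⟩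
    obtain ⟨j, rfl⟩ : ∃ k : Fin 5, j = Fin.castAdd 4 k := ⟨⟨j, by omega⟩, rfl⟩
    have := hcp i j
    simp only [Equiv.trans_apply, hσp]
    exact this
end

section
/- Let G be a finite simple graph with 10 vertices and 20 edges in which every vertex has degree exactly 4. Then G is 2-apex. -/
namespace Search

/-- adjacency bit -/
def T (M a b : ℕ) : Bool :=
  Nat.beq (Nat.land 1 (Nat.shiftRight M (Nat.add (Nat.mul 10 a) b))) 1
def row (M i : ℕ) : ℕ := Nat.land (Nat.shiftRight M (Nat.mul 10 i)) 1023
def bit (v j : ℕ) : ℕ :=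
  Nat.lor (Nat.pow 2 (Nat.add (Nat.mul 10 v) j)) (Nat.pow 2 (Nat.add (Nat.mul 10 j) v))
def force (n : ℕ) (k : ℕ → Bool) : Bool := Nat.rec (k 0) (fun m _ => k (Nat.succ m)) n
/-- at least `k` bits set -/
def pcge : ℕ → ℕ → Bool
  | 0, _ => true
  | k + 1, x => force x fun x => bif Nat.beq x 0 then false else pcge k (Nat.land x (Nat.pred x))
def idx : List ℕ := [0, 1, 2, 3, 4, 5, 6, 7, 8, 9]

def diffAt (P N a b u : ℕ) : Bool := (T P a u && T N b u) || (T N a u && T P b u)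
def crit2 (P N a b : ℕ) : Bool :=
  idx.any fun u => diffAt P N a b u &&
    idx.any fun w => T P u w && diffAt P N a b w &&
      idx.any fun x => !(Nat.beq x a) && !(Nat.beq x b) && T P x u && T P x w
def crit3 (P : ℕ) : Bool :=
  [0, 1, 2, 3, 4].all fun i => [0, 1, 2, 3, 4].all fun j => Nat.beq i j || T P i j
def chk (P N : ℕ) : Bool :=
  crit3 P || idx.any fun a => idx.any fun b =>
    Nat.ble (Nat.succ b) a && T N a b && force (Nat.land (row P a) (row P b)) fun c =>
      pcge 2 c && (pcge 3 c || crit2 P N a b)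
def mask (M j k : ℕ) : ℕ := Nat.lor (Nat.lor (row M j) (Nat.pow 2 j)) (Nat.pow 2 k)
def twin (P N j k : ℕ) : Bool :=
  Nat.beq (mask P j k) (mask P k j) && Nat.beq (mask N j k) (mask N k j)
def addN (P N v j : ℕ) : List ℕ → ℕ → ℕ
  | [], acc => acc
  | k :: l, acc =>
    addN P N v j l (bif !(Nat.beq k v) && twin P N j k then Nat.lor acc (bit v k) else acc)
def tooMany (c M : ℕ) : Bool := idx.any fun i => pcge c (row M i)

def go : List (ℕ × ℕ) → ℕ → ℕ → Bool
  | [], _, _ => false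
  | (v, j) :: L, P, N =>
    bif Nat.beq v j then chk P N || go L P N
    else bif T P v j || T N v j then go L P N
    else (force (Nat.lor P (bit v j)) fun P' => tooMany 5 P' || go L P' N) &&
      (force (addN P N v j idx N) fun N' => tooMany 6 N' || go L P N')

def tasks : List (ℕ × ℕ) :=
 [(0, 1), (0, 2), (0, 3), (0, 4), (0, 5), (0, 6), (0, 7), (0, 8), (0, 9), (0, 0),
  (1, 2), (1, 3), (1, 4), (1, 5), (1, 6), (1, 7), (1, 8), (1, 9), (1, 1),
  (2, 3), (2, 4), (2, 5), (2, 6), (2, 7), (2, 8), (2, 9), (2, 2),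
  (3, 4), (3, 5), (3, 6), (3, 7), (3, 8), (3, 9), (3, 3),
  (4, 5), (4, 6), (4, 7), (4, 8), (4, 9), (4, 4),
  (5, 6), (5, 7), (5, 8), (5, 9), (5, 5),
  (6, 7), (6, 8), (6, 9), (6, 6), (7, 8), (7, 9), (7, 7), (8, 9), (8, 8)]

theorem go_true : go tasks 0 0 = true := by decide +kernel
theorem pcge_spec_aux : ∀ k < 7, ∀ p < 32, ∀ q < 32, pcge k (32 * p + q) = true →
    k ≤ ((Finset.range 10).filter (fun i => Nat.testBit (32 * p + q) i = true)).card := by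
  decide +kernel
theorem pcge_spec (k : ℕ) (hk : k < 7) (x : ℕ) (hx : x < 1024) (h : pcge k x = true) :
    k ≤ ((Finset.range 10).filter (fun i => Nat.testBit x i = true)).card := by
  have e : 32 * (x / 32) + x % 32 = x := Nat.div_add_mod x 32
  have := pcge_spec_aux k hk (x / 32) (by omega) (x % 32) (by omega)
  rw [e] at this
  exact this h

theorem force_eq (n : ℕ) (k : ℕ → Bool) : force n k = k n := by
  cases n <;> rfl

theorem T_eq (M a b : ℕ) : T M a b = Nat.testBit M (10 * a + b) := by
  have h : Nat.land 1 (Nat.shiftRight M (Nat.add (Nat.mul 10 a) b))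
      = 1 &&& (M >>> (10 * a + b)) := rfl
  rw [T, h, Nat.testBit, Nat.one_and_eq_mod_two]
  rcases Nat.mod_two_eq_zero_or_one (M >>> (10 * a + b)) with h | h <;> rw [h] <;> rfl

theorem row_eq (M i : ℕ) : row M i = (M >>> (10 * i)) &&& (2 ^ 10 - 1) := rfl

theorem row_lt (M i : ℕ) : row M i < 1024 := by
  rw [row_eq, Nat.and_two_pow_sub_one_eq_mod]
  exact Nat.mod_lt _ (by norm_num)

theorem row_testBit (M i j : ℕ) (hj : j < 10) : Nat.testBit (row M i) j = T M i j := by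
  rw [row_eq, T_eq, Nat.testBit_and, Nat.testBit_shiftRight, Nat.testBit_two_pow_sub_one]
  simp [hj]

theorem T_or_bit (M v j a b : ℕ) (hv : v < 10) (hj : j < 10) (_ha : a < 10) (hb : b < 10) :
    T (Nat.lor M (bit v j)) a b = true ↔
      (T M a b = true ∨ (a = v ∧ b = j) ∨ (a = j ∧ b = v)) := by
  have h : Nat.lor M (bit v j) = M ||| (2 ^ (10 * v + j) ||| 2 ^ (10 * j + v)) := rfl
  rw [T_eq, T_eq, h, Nat.testBit_or, Nat.testBit_or, Nat.testBit_two_pow, Nat.testBit_two_pow]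
  simp only [Bool.or_eq_true, decide_eq_true_eq]
  have h1 : 10 * v + j = 10 * a + b ↔ (a = v ∧ b = j) := by omega
  have h2 : 10 * j + v = 10 * a + b ↔ (a = j ∧ b = v) := by omega
  rw [h1, h2]

theorem mask_eq (M j k x : ℕ) (h : mask M j k = mask M k j) (hx : x < 10) (hxj : x ≠ j)
    (hxk : x ≠ k) : T M j x = T M k x := by
  have e : ∀ j k, mask M j k = row M j ||| 2 ^ j ||| 2 ^ k := fun _ _ => rfl
  rw [e, e] at h
  have := congrArg (fun n => Nat.testBit n x) h
  simpa [Nat.testBit_or, Nat.testBit_two_pow, row_testBit _ _ _ hx, hxj.symm, hxk.symm] using this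

variable {V : Type*} [Fintype V]

/-- Two nonadjacent vertices with at least three common neighbours. -/
def Good1 (G : SimpleGraph V) : Prop :=
  ∃ a b, a ≠ b ∧ ¬ G.Adj a b ∧ 3 ≤ (G.neighborSet a ∩ G.neighborSet b).ncard

/-- Two nonadjacent vertices with two common neighbours and a suitable triangle. -/
def Good2 (G : SimpleGraph V) : Prop :=
  ∃ a b, a ≠ b ∧ ¬ G.Adj a b ∧ 2 ≤ (G.neighborSet a ∩ G.neighborSet b).ncard ∧
    ∃ u w x, G.Adj u w ∧ x ≠ a ∧ x ≠ b ∧ G.Adj x u ∧ G.Adj x w ∧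
      ((G.Adj a u ∧ ¬ G.Adj b u) ∨ (¬ G.Adj a u ∧ G.Adj b u)) ∧
      ((G.Adj a w ∧ ¬ G.Adj b w) ∨ (¬ G.Adj a w ∧ G.Adj b w))

/-- A clique on five vertices. -/
def Good3 (G : SimpleGraph V) : Prop :=
  ∃ c : Fin 5 → V, ∀ i j, i ≠ j → G.Adj (c i) (c j)

structure Compat (G : SimpleGraph V) (f : ℕ → V) (P N : ℕ) : Prop where
  inj : ∀ a < 10, ∀ b < 10, f a = f b → a = b
  pos : ∀ a < 10, ∀ b < 10, T P a b = true → G.Adj (f a) (f b)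
  neg : ∀ a < 10, ∀ b < 10, T N a b = true → ¬ G.Adj (f a) (f b)

def Sym (M : ℕ) : Prop := ∀ a < 10, ∀ b < 10, T M a b = true → T M b a = true

theorem Sym.or_bit {M v j : ℕ} (h : Sym M) (hv : v < 10) (hj : j < 10) :
    Sym (Nat.lor M (bit v j)) := by
  intro a ha b hb
  rw [T_or_bit _ _ _ _ _ hv hj ha hb, T_or_bit _ _ _ _ _ hv hj hb ha]
  have := h a ha b hb
  tauto

theorem ncard_of_pcge {f : ℕ → V} (inj : ∀ a < 10, ∀ b < 10, f a = f b → a = b)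
    (k : ℕ) (hk : k < 7) (x : ℕ) (hx : x < 1024) (h : pcge k x = true) (S : Set V)
    (hS : ∀ i < 10, Nat.testBit x i = true → f i ∈ S) : k ≤ S.ncard := by
  classical
  refine (pcge_spec k hk x hx h).trans ?_
  rw [← Finset.card_image_of_injOn (f := f)]
  · rw [← Set.ncard_coe_finset]
    apply Set.ncard_le_ncard _ (Set.toFinite _)
    intro y hy
    simp only [Finset.coe_image, Set.mem_image, Finset.coe_filter, Finset.mem_range,
      Set.mem_ofPred_eq] at hy
    obtain ⟨i, ⟨hi, hb⟩, rfl⟩ := hy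
    exact hS i hi hb
  · intro a ha b hb hab
    simp only [Finset.coe_filter, Finset.mem_range, Set.mem_ofPred_eq] at ha hb
    exact inj a ha.1 b hb.1 hab

theorem idx_lt {i : ℕ} (h : i ∈ idx) : i < 10 := by
  simp only [idx, List.mem_cons, List.not_mem_nil, or_false] at h; omega

theorem mem_idx {i : ℕ} (h : i < 10) : i ∈ idx := by
  simp only [idx, List.mem_cons, List.not_mem_nil]; omega

theorem diffAt_spec {G : SimpleGraph V} {f : ℕ → V} {P N : ℕ} (hc : Compat G f P N)
    {a b u : ℕ} (ha : a < 10) (hb : b < 10) (hu : u < 10) (h : diffAt P N a b u = true) :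
    (G.Adj (f a) (f u) ∧ ¬ G.Adj (f b) (f u)) ∨ (¬ G.Adj (f a) (f u) ∧ G.Adj (f b) (f u)) := by
  simp only [diffAt, Bool.or_eq_true, Bool.and_eq_true] at h
  rcases h with ⟨h1, h2⟩ | ⟨h1, h2⟩
  · exact Or.inl ⟨hc.pos _ ha _ hu h1, hc.neg _ hb _ hu h2⟩
  · exact Or.inr ⟨hc.neg _ ha _ hu h1, hc.pos _ hb _ hu h2⟩

theorem chk_sound {G : SimpleGraph V} {f : ℕ → V} {P N : ℕ} (hc : Compat G f P N)
    (h : chk P N = true) : Good1 G ∨ Good2 G ∨ Good3 G := by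
  rw [chk, Bool.or_eq_true] at h
  rcases h with h | h
  · right; right
    refine ⟨fun i => f i, fun i j hij => ?_⟩
    simp only [crit3, List.all_eq_true, Bool.or_eq_true] at h
    have hm : ∀ i : Fin 5, (i : ℕ) ∈ [0, 1, 2, 3, 4] := by decide
    rcases h i (hm i) j (hm j) with h | h
    · exact absurd (Fin.ext (Nat.eq_of_beq_eq_true h)) hij
    · exact hc.pos _ (by omega) _ (by omega) h
  · simp only [List.any_eq_true, Bool.and_eq_true, force_eq, Bool.or_eq_true] at h
    obtain ⟨a, ha, b, hb, ⟨hab, hN⟩, h2, h⟩ := h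
    have ha := idx_lt ha
    have hb := idx_lt hb
    have hab : b < a := Nat.le_of_ble_eq_true hab
    have hne : f a ≠ f b := fun e => by have := hc.inj a ha b hb e; omega
    have hbits : ∀ i < 10, Nat.testBit (Nat.land (row P a) (row P b)) i = true →
        f i ∈ G.neighborSet (f a) ∩ G.neighborSet (f b) := by
      intro i hi hh
      change Nat.testBit (row P a &&& row P b) i = true at hh
      rw [Nat.testBit_and, row_testBit _ _ _ hi, row_testBit _ _ _ hi, Bool.and_eq_true] at hh
      exact ⟨hc.pos a ha i hi hh.1, hc.pos b hb i hi hh.2⟩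
    have hlt : Nat.land (row P a) (row P b) < 1024 :=
      lt_of_le_of_lt (Nat.and_le_left (n := row P a) (m := row P b)) (row_lt P a)
    rcases h with h | h
    · left
      exact ⟨f a, f b, hne, hc.neg a ha b hb hN,
        ncard_of_pcge hc.inj 3 (by norm_num) _ hlt h _ hbits⟩
    · right; left
      simp only [crit2, List.any_eq_true, Bool.and_eq_true] at h
      obtain ⟨u, hu, hd, w, hw, ⟨huw, hd'⟩, x, hx, ⟨⟨hxa, hxb⟩, hxu⟩, hxw⟩ := h
      have hu := idx_lt hu
      have hw := idx_lt hw
      have hx := idx_lt hx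
      refine ⟨f a, f b, hne, hc.neg a ha b hb hN,
        ncard_of_pcge hc.inj 2 (by norm_num) _ hlt h2 _ hbits, f u, f w, f x,
        hc.pos _ hu _ hw huw, ?_, ?_, hc.pos _ hx _ hu hxu, hc.pos _ hx _ hw hxw,
        diffAt_spec hc ha hb hu hd, diffAt_spec hc ha hb hw hd'⟩
      · intro e
        rw [hc.inj x hx a ha e] at hxa
        simp at hxa
      · intro e
        rw [hc.inj x hx b hb e] at hxb
        simp at hxb

theorem addN_T (P N v j : ℕ) (hv : v < 10) (l : List ℕ) (hl : ∀ k ∈ l, k < 10) (acc a b : ℕ)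
    (ha : a < 10) (hb : b < 10) :
    T (addN P N v j l acc) a b = true ↔ (T acc a b = true ∨
      ∃ k ∈ l, k ≠ v ∧ twin P N j k = true ∧ ((a = v ∧ b = k) ∨ (a = k ∧ b = v))) := by
  induction l generalizing acc with
  | nil => simp [addN]
  | cons k l ih =>
    rw [addN, ih (fun k hk => hl k (List.mem_cons_of_mem _ hk))]
    have hk := hl k List.mem_cons_self
    have hbeq : (!(Nat.beq k v) && twin P N j k) = true ↔ (k ≠ v ∧ twin P N j k = true) := by
      rw [Bool.and_eq_true, Bool.not_eq_true', Bool.eq_false_iff]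
      exact and_congr_left fun _ => not_congr (iff_of_eq Nat.beq_eq)
    simp only [List.mem_cons, exists_eq_or_imp]
    generalize (∃ k ∈ l, k ≠ v ∧ twin P N j k = true ∧ ((a = v ∧ b = k) ∨ (a = k ∧ b = v))) = E
    by_cases hc : k ≠ v ∧ twin P N j k = true
    · rw [hbeq.2 hc, cond_true, T_or_bit _ _ _ _ _ hv hk ha hb]
      generalize ((a = v ∧ b = k) ∨ (a = k ∧ b = v)) = F
      simp only [ne_eq, hc.1, hc.2, not_false_eq_true, true_and]
      exact or_assoc
    · rw [Bool.eq_false_iff.2 (fun h => hc (hbeq.1 h)), cond_false]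
      rw [← and_assoc (a := k ≠ v)]
      simp only [hc, false_and, false_or]

theorem compat_swap {G : SimpleGraph V} {f : ℕ → V} {P N : ℕ} (hc : Compat G f P N)
    (hP : Sym P) (hN : Sym N) {j k : ℕ} (hj : j < 10) (hk : k < 10) (ht : twin P N j k = true) :
    Compat G (fun i => f (Equiv.swap j k i)) P N := by
  rw [twin, Bool.and_eq_true] at ht
  have hp : ∀ x < 10, x ≠ j → x ≠ k → T P j x = T P k x := fun x hx h1 h2 =>
    mask_eq P j k x (Nat.eq_of_beq_eq_true ht.1) hx h1 h2
  have hn : ∀ x < 10, x ≠ j → x ≠ k → T N j x = T N k x := fun x hx h1 h2 =>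
    mask_eq N j k x (Nat.eq_of_beq_eq_true ht.2) hx h1 h2
  have hlt : ∀ a < 10, Equiv.swap j k a < 10 := by
    intro a ha
    rw [Equiv.swap_apply_def]; split_ifs <;> assumption
  refine ⟨fun a ha b hb h => (Equiv.swap j k).injective
    (hc.inj _ (hlt a ha) _ (hlt b hb) h), ?_, ?_⟩
  · intro a ha b hb h
    have h' := hP a ha b hb h
    have hadj := hc.pos a ha b hb h
    have irr := G.irrefl (v := f j)
    have irr' := G.irrefl (v := f k)
    have key : ∀ x < 10, T P j x = true → x ≠ j → x ≠ k → G.Adj (f k) (f x) :=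
      fun x hx h h1 h2 => hc.pos k hk x hx ((hp x hx h1 h2) ▸ h)
    have key' : ∀ x < 10, T P k x = true → x ≠ j → x ≠ k → G.Adj (f j) (f x) :=
      fun x hx h h1 h2 => hc.pos j hj x hx ((hp x hx h1 h2).symm ▸ h)
    simp only [Equiv.swap_apply_def]
    split_ifs with h1 h2 h3 h4 h5 h6 h7 <;> subst_vars
    · exact absurd hadj irr
    · exact hadj.symm
    · exact key _ hb h h2 h3
    · exact hadj.symm
    · exact absurd hadj irr'
    · exact key' _ hb h h5 h6
    · exact (key _ ha h' h1 h4).symm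
    · exact (key' _ ha h' h1 h4).symm
    · exact hadj
  · intro a ha b hb h
    have h' := hN a ha b hb h
    have hadj := hc.neg a ha b hb h
    have irr := G.irrefl (v := f j)
    have irr' := G.irrefl (v := f k)
    have key : ∀ x < 10, T N j x = true → x ≠ j → x ≠ k → ¬ G.Adj (f k) (f x) :=
      fun x hx h h1 h2 => hc.neg k hk x hx ((hn x hx h1 h2) ▸ h)
    have key' : ∀ x < 10, T N k x = true → x ≠ j → x ≠ k → ¬ G.Adj (f j) (f x) :=
      fun x hx h h1 h2 => hc.neg j hj x hx ((hn x hx h1 h2).symm ▸ h)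
    simp only [Equiv.swap_apply_def]
    split_ifs with h1 h2 h3 h4 h5 h6 h7 <;> subst_vars
    · exact irr'
    · exact fun h => hadj h.symm
    · exact key _ hb h h2 h3
    · exact fun h => hadj h.symm
    · exact irr
    · exact key' _ hb h h5 h6
    · exact fun hh => (key _ ha h' h1 h4) hh.symm
    · exact fun hh => (key' _ ha h' h1 h4) hh.symm
    · exact hadj

theorem tooMany_pos {G : SimpleGraph V} (hdeg : ∀ v : V, (G.neighborSet v).ncard = 4)
    {f : ℕ → V} {P N : ℕ} (hc : Compat G f P N) (h : tooMany 5 P = true) : False := by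
  simp only [tooMany, List.any_eq_true] at h
  obtain ⟨i, hi, h⟩ := h
  have := ncard_of_pcge hc.inj 5 (by norm_num) _ (row_lt _ _) h (G.neighborSet (f i))
    (fun j hj hb => by
      rw [row_testBit _ _ _ hj] at hb
      exact hc.pos _ (idx_lt hi) _ hj hb)
  rw [hdeg] at this
  omega

theorem tooMany_neg {G : SimpleGraph V} (hV : Fintype.card V = 10)
    (hdeg : ∀ v : V, (G.neighborSet v).ncard = 4)
    {f : ℕ → V} {P N : ℕ} (hc : Compat G f P N) (hN : ∀ a < 10, T N a a = false)
    (h : tooMany 6 N = true) : False := by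
  simp only [tooMany, List.any_eq_true] at h
  obtain ⟨i, hi, h⟩ := h
  have hi := idx_lt hi
  have := ncard_of_pcge hc.inj 6 (by norm_num) _ (row_lt _ _) h
    ((insert (f i) (G.neighborSet (f i)))ᶜ)
    (fun j hj hb => by
      rw [row_testBit _ _ _ hj] at hb
      have h1 := hc.neg _ hi _ hj hb
      simp only [Set.mem_compl_iff, Set.mem_insert_iff, SimpleGraph.mem_neighborSet, not_or]
      refine ⟨fun e => ?_, h1⟩
      rw [hc.inj j hj i hi e, hN i hi] at hb
      exact absurd hb (by decide))
  have h2 := Set.ncard_add_ncard_compl (insert (f i) (G.neighborSet (f i)))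
  rw [Set.ncard_insert_of_notMem (by simp), hdeg, Nat.card_eq_fintype_card, hV] at h2
  omega

theorem go_sound {G : SimpleGraph V} (hV : Fintype.card V = 10)
    (hdeg : ∀ v : V, (G.neighborSet v).ncard = 4) (L : List (ℕ × ℕ))
    (hL : ∀ t ∈ L, t.1 < 10 ∧ t.2 < 10) (P N : ℕ) (f : ℕ → V) (hc : Compat G f P N)
    (hP : Sym P) (hN : Sym N) (hN' : ∀ a < 10, T N a a = false) (h : go L P N = true) :
    Good1 G ∨ Good2 G ∨ Good3 G := by
  induction L generalizing P N f with
  | nil => simp [go] at h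
  | cons t L ih =>
    obtain ⟨v, j⟩ := t
    have ih := ih (fun t ht => hL t (List.mem_cons_of_mem _ ht))
    obtain ⟨hv, hj⟩ : v < 10 ∧ j < 10 := hL (v, j) List.mem_cons_self
    rw [go] at h
    by_cases hvj : v = j
    · rw [hvj, Nat.beq_refl, cond_true, Bool.or_eq_true] at h
      rcases h with h | h
      · exact chk_sound hc h
      · exact ih P N f hc hP hN hN' h
    · have : Nat.beq v j = false := by
        rw [Bool.eq_false_iff]; exact fun h => hvj (Nat.eq_of_beq_eq_true h)
      rw [this, cond_false] at h
      cases hk : (T P v j || T N v j)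
      swap
      · rw [hk, cond_true] at h
        exact ih P N f hc hP hN hN' h
      rw [hk, cond_false, force_eq, force_eq, Bool.and_eq_true, Bool.or_eq_true,
        Bool.or_eq_true] at h
      obtain ⟨hpos, hneg⟩ := h
      -- the branch in which the pair is an edge
      have pos : ∀ f : ℕ → V, Compat G f P N → G.Adj (f v) (f j) →
          Good1 G ∨ Good2 G ∨ Good3 G := by
        intro f hc hadj
        have hc' : Compat G f (Nat.lor P (bit v j)) N := by
          refine ⟨hc.inj, ?_, hc.neg⟩
          intro a ha b hb hT
          rw [T_or_bit _ _ _ _ _ hv hj ha hb] at hT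
          rcases hT with hT | ⟨rfl, rfl⟩ | ⟨rfl, rfl⟩
          · exact hc.pos a ha b hb hT
          · exact hadj
          · exact hadj.symm
        rcases hpos with h | h
        · exact (tooMany_pos hdeg hc' h).elim
        · exact ih _ N f hc' (hP.or_bit hv hj) hN hN' h
      by_cases hex : ∃ k, k < 10 ∧ k ≠ v ∧ twin P N j k = true ∧ G.Adj (f v) (f k)
      · obtain ⟨k, hk, hkv, ht, hadj⟩ := hex
        refine pos _ (compat_swap hc hP hN hj hk ht) ?_
        simpa [Equiv.swap_apply_of_ne_of_ne hvj hkv.symm] using hadj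
      · have hidx : ∀ k ∈ idx, k < 10 := fun k hk => idx_lt hk
        have hc' : Compat G f P (addN P N v j idx N) := by
          refine ⟨hc.inj, hc.pos, ?_⟩
          intro a ha b hb hT
          rw [addN_T _ _ _ _ hv _ hidx _ _ _ ha hb] at hT
          rcases hT with hT | ⟨k, hk, hkv, ht, ⟨rfl, rfl⟩ | ⟨rfl, rfl⟩⟩
          · exact hc.neg a ha b hb hT
          · exact fun hadj => hex ⟨_, hb, hkv, ht, hadj⟩
          · exact fun hadj => hex ⟨_, ha, hkv, ht, hadj.symm⟩
        have hs : Sym (addN P N v j idx N) := by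
          intro a ha b hb
          rw [addN_T _ _ _ _ hv _ hidx _ _ _ ha hb, addN_T _ _ _ _ hv _ hidx _ _ _ hb ha]
          rintro (h | ⟨k, h1, h2, h3, h4⟩)
          · exact Or.inl (hN a ha b hb h)
          · exact Or.inr ⟨k, h1, h2, h3, by tauto⟩
        have hd : ∀ a < 10, T (addN P N v j idx N) a a = false := by
          intro a ha
          rw [Bool.eq_false_iff, ne_eq, addN_T _ _ _ _ hv _ hidx _ _ _ ha ha]
          rintro (h | ⟨k, h1, h2, h3, h4⟩)
          · rw [hN' a ha] at h; exact absurd h (by decide)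
          · omega
        rcases hneg with h | h
        · exact (tooMany_neg hV hdeg hc' hd h).elim
        · exact ih P _ f hc' hP hs hd h

theorem good (G : SimpleGraph V) (hV : Fintype.card V = 10)
    (hdeg : ∀ v : V, (G.neighborSet v).ncard = 4) : Good1 G ∨ Good2 G ∨ Good3 G := by
  let e : Fin 10 ≃ V := (Fintype.equivFinOfCardEq hV).symm
  have hT : ∀ a b, T 0 a b = false := by intro a b; rw [T_eq]; simp
  refine go_sound hV hdeg tasks (by decide) 0 0 (fun i => if h : i < 10 then e ⟨i, h⟩ else e 0)
    ⟨?_, ?_, ?_⟩ ?_ ?_ (fun a _ => hT a a) go_true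
  · intro a ha b hb h
    simpa [ha, hb] using h
  all_goals
    intro a _ b _ h
    rw [hT] at h
    exact absurd h (by decide)
end Search

namespace Search
open Classical in
/-- degree -/
noncomputable def d {U : Type*} [Fintype U] (H : SimpleGraph U) (x : U) : ℕ :=
  (Finset.univ.filter (fun y => H.Adj x y)).card

open Classical in
/-- directed edges leaving `B` -/
noncomputable def Out {U : Type*} [Fintype U] (H : SimpleGraph U) (B : Finset U) :
    Finset (U × U) :=
  Finset.univ.filter (fun p => p.1 ∈ B ∧ p.2 ∉ B ∧ H.Adj p.1 p.2)

open Classical in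
theorem out_le {U : Type*} [Fintype U] (H : SimpleGraph U) (B : Finset U)
    (hc : (H.induce (B : Set U)).Connected) :
    (Out H B).card + 2 * B.card ≤ ∑ x ∈ B, d H x + 2 := by
  have h1 : ∑ x ∈ B, d H x
      = (Finset.univ.filter (fun p : U × U => p.1 ∈ B ∧ H.Adj p.1 p.2)).card := by
    rw [Finset.card_filter, Fintype.sum_prod_type, ← Finset.sum_filter_add_sum_filter_not
      Finset.univ (fun x => x ∈ B)]
    rw [Finset.filter_mem_eq_inter, Finset.univ_inter]
    rw [Finset.sum_congr (s₁ := Finset.univ.filter (fun x => x ∉ B)) rfl (g := fun _ => 0)]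
    · rw [Finset.sum_const_zero, add_zero]
      refine Finset.sum_congr rfl fun x hx => ?_
      rw [d, Finset.card_filter]
      simp [hx]
    · intro x hx
      simp only [Finset.mem_filter, Finset.mem_univ, true_and] at hx
      simp [hx]
  have h2 : (Finset.univ.filter (fun p : U × U => p.1 ∈ B ∧ H.Adj p.1 p.2)).card
      = (Finset.univ.filter (fun p : U × U => p.1 ∈ B ∧ p.2 ∈ B ∧ H.Adj p.1 p.2)).card
        + (Out H B).card := by
    rw [Out, ← Finset.card_union_of_disjoint]
    · congr 1
      ext p
      simp only [Finset.mem_filter, Finset.mem_univ, true_and, Finset.mem_union]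
      tauto
    · rw [Finset.disjoint_left]
      intro p hp hq
      simp only [Finset.mem_filter, Finset.mem_univ, true_and] at hp hq
      exact hq.2.1 hp.2.1
  have h3 := (H.induce (B : Set U)).two_mul_card_edgeFinset
  have h4 := hc.card_vert_le_card_edgeSet_add_one
  rw [Nat.card_eq_fintype_card, Nat.card_eq_fintype_card, ← SimpleGraph.edgeFinset_card] at h4
  have h5 : Fintype.card ((B : Set U) : Type _) = B.card := by simp
  have h6 : (Finset.univ.filter (fun x : ((B : Set U) : Type _) × ((B : Set U) : Type _) =>
        (H.induce (B : Set U)).Adj x.1 x.2)).card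
      ≤ (Finset.univ.filter (fun p : U × U => p.1 ∈ B ∧ p.2 ∈ B ∧ H.Adj p.1 p.2)).card := by
    apply Finset.card_le_card_of_injOn (fun x => ((x.1 : U), (x.2 : U)))
    · intro x hx
      simp only [Finset.coe_filter, Finset.mem_univ, true_and, Set.mem_ofPred_eq] at hx ⊢
      exact ⟨x.1.2, x.2.2, hx⟩
    · intro x _ y _ h
      simp only [Prod.mk.injEq] at h
      exact Prod.ext (Subtype.ext h.1) (Subtype.ext h.2)
  have h7 : 2 * (H.induce (B : Set U)).edgeFinset.card
     ≤ (Finset.univ.filter (fun p : U × U => p.1 ∈ B ∧ p.2 ∈ B ∧ H.Adj p.1 p.2)).card := by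
    rw [h3]; exact h6
  omega

structure Model {W U : Type*} (K : SimpleGraph W) (H : SimpleGraph U) (B : W → Finset U) :
    Prop where
  conn : ∀ w, (H.induce (B w : Set U)).Connected
  disj : ∀ w z x, x ∈ B w → x ∈ B z → w = z
  edge : ∀ w z, K.Adj w z → ∃ x ∈ B w, ∃ y ∈ B z, H.Adj x y

theorem exists_model {W U : Type*} [Fintype U] {K : SimpleGraph W} {H : SimpleGraph U}
    (h : K.IsMinor H) : ∃ B, Model K H B := by
  classical
  obtain ⟨f, _, hc, hd, he⟩ := h
  refine ⟨fun w => (f w).toFinset, ⟨fun w => ?_, ?_, ?_⟩⟩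
  · rw [Set.coe_toFinset]; exact hc w
  · intro w z x hw hz
    by_contra hne
    exact Set.disjoint_left.1 (hd hne) (Set.mem_toFinset.1 hw) (Set.mem_toFinset.1 hz)
  · intro w z hwz
    obtain ⟨x, hx, y, hy, hxy⟩ := he hwz
    exact ⟨x, Set.mem_toFinset.2 hx, y, Set.mem_toFinset.2 hy, hxy⟩

theorem Model.exists_out {W U : Type*} [Fintype U] {K : SimpleGraph W}
    {H : SimpleGraph U} {B : W → Finset U} (m : Model K H B) (w : W) :
    ∃ e : W → U × U, ∀ z, K.Adj w z → e z ∈ Out H (B w) ∧ (e z).2 ∈ B z := by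
  classical
  have : ∀ z, ∃ p : U × U, K.Adj w z → p ∈ Out H (B w) ∧ p.2 ∈ B z := by
    intro z
    by_cases hz : K.Adj w z
    · obtain ⟨x, hx, y, hy, hxy⟩ := m.edge w z hz
      refine ⟨(x, y), fun _ => ⟨?_, hy⟩⟩
      simp only [Out, Finset.mem_filter, Finset.mem_univ, true_and]
      exact ⟨hx, fun h => hz.ne (m.disj _ _ _ h hy), hxy⟩
    · obtain ⟨x⟩ := (m.conn w).nonempty
      exact ⟨(x, x), fun h => absurd h hz⟩
  choose e he using this
  exact ⟨e, he⟩

theorem Model.le_out {W U : Type*} [Fintype W] [Fintype U] {K : SimpleGraph W}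
    {H : SimpleGraph U} {B : W → Finset U} (m : Model K H B) (w : W) :
    d K w ≤ (Out H (B w)).card := by
  classical
  obtain ⟨e, he⟩ := m.exists_out w
  rw [d]
  apply Finset.card_le_card_of_injOn e
  · intro z hz
    simp only [Finset.coe_filter, Finset.mem_univ, true_and, Set.mem_ofPred_eq] at hz
    exact (he z hz).1
  · intro z hz z' hz' h
    simp only [Finset.coe_filter, Finset.mem_univ, true_and, Set.mem_ofPred_eq] at hz hz'
    exact m.disj _ _ _ (he z hz).2 (h ▸ (he z' hz').2)

theorem Model.tight {W U : Type*} [Fintype W] [Fintype U] {K : SimpleGraph W}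
    {H : SimpleGraph U} {B : W → Finset U} (m : Model K H B) (w : W)
    (hw : (Out H (B w)).card ≤ d K w) :
    (∀ p ∈ Out H (B w), ∃ z, K.Adj w z ∧ p.2 ∈ B z) ∧
    (∀ p ∈ Out H (B w), ∀ q ∈ Out H (B w), ∀ z, p.2 ∈ B z → q.2 ∈ B z → p = q) := by
  classical
  obtain ⟨e, he⟩ := m.exists_out w
  have hinj : Set.InjOn e (Finset.univ.filter (fun z => K.Adj w z) : Finset W) := by
    intro z hz z' hz' h
    simp only [Finset.coe_filter, Finset.mem_univ, true_and, Set.mem_ofPred_eq] at hz hz'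
    exact m.disj _ _ _ (he z hz).2 (h ▸ (he z' hz').2)
  have himg : (Finset.univ.filter (fun z => K.Adj w z)).image e = Out H (B w) := by
    apply Finset.eq_of_subset_of_card_le
    · intro p hp
      simp only [Finset.mem_image, Finset.mem_filter, Finset.mem_univ, true_and] at hp
      obtain ⟨z, hz, rfl⟩ := hp
      exact (he z hz).1
    · rw [Finset.card_image_of_injOn hinj]
      refine hw.trans (le_of_eq ?_)
      rw [d]
  have key : ∀ p ∈ Out H (B w), ∃ z, K.Adj w z ∧ e z = p := by
    intro p hp
    rw [← himg] at hp
    simpa only [Finset.mem_image, Finset.mem_filter, Finset.mem_univ, true_and] using hp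
  refine ⟨fun p hp => ?_, fun p hp q hq z hpz hqz => ?_⟩
  · obtain ⟨z, hz, rfl⟩ := key p hp
    exact ⟨z, hz, (he z hz).2⟩
  · obtain ⟨y, hy, rfl⟩ := key p hp
    obtain ⟨y', hy', rfl⟩ := key q hq
    have h1 := m.disj _ _ _ (he y hy).2 hpz
    have h2 := m.disj _ _ _ (he y' hy').2 hqz
    rw [h1, h2]

/-- the excess inequality for a branch set -/
theorem Model.excess {W U : Type*} [Fintype W] [Fintype U] {K : SimpleGraph W}
    {H : SimpleGraph U} {B : W → Finset U} (m : Model K H B) (h2 : ∀ x, 2 ≤ d H x) (w : W) :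
    (Out H (B w)).card ≤ ∑ x ∈ B w, (d H x - 2) + 2 := by
  have h := out_le H (B w) (m.conn w)
  have : ∑ x ∈ B w, d H x = ∑ x ∈ B w, (d H x - 2) + 2 * (B w).card := by
    rw [mul_comm, ← smul_eq_mul, ← Finset.sum_const, ← Finset.sum_add_distrib]
    exact Finset.sum_congr rfl fun x _ => by have := h2 x; omega
  omega

theorem no_K5 {U : Type*} [Fintype U] {H : SimpleGraph U} (h2 : ∀ x, 2 ≤ d H x)
    (hsum : ∑ x, (d H x - 2) ≤ 9) : ¬ (⊤ : SimpleGraph (Fin 5)).IsMinor H := by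
  classical
  intro h
  obtain ⟨B, m⟩ := exists_model h
  have hd : ∀ w, d (⊤ : SimpleGraph (Fin 5)) w = 4 := by
    intro w
    rw [d]
    simp only [SimpleGraph.top_adj]
    revert w; decide
  have h1 : ∀ w, 2 ≤ ∑ x ∈ B w, (d H x - 2) := by
    intro w
    have := m.excess h2 w
    have := m.le_out w
    rw [hd] at this
    omega
  have h3 : ∑ w, ∑ x ∈ B w, (d H x - 2) ≤ ∑ x, (d H x - 2) := by
    rw [← Finset.sum_biUnion]
    · exact Finset.sum_le_sum_of_subset (Finset.subset_univ _)
    · intro w _ z _ hne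
      exact Finset.disjoint_left.2 fun x hw hz => hne (m.disj _ _ _ hw hz)
  have h4 : ∑ w : Fin 5, 2 ≤ ∑ w, ∑ x ∈ B w, (d H x - 2) := Finset.sum_le_sum fun w _ => h1 w
  simp at h4
  omega

theorem K33_no_triangle (p q s : Fin 3 ⊕ Fin 3)
    (h1 : (completeBipartiteGraph (Fin 3) (Fin 3)).Adj p q)
    (h2 : (completeBipartiteGraph (Fin 3) (Fin 3)).Adj p s)
    (h3 : (completeBipartiteGraph (Fin 3) (Fin 3)).Adj q s) : False := by
  rcases p with p | p <;> rcases q with q | q <;> rcases s with s | s <;>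
    simp [completeBipartiteGraph_adj] at h1 h2 h3

theorem K33_rep {U : Type*} [Fintype U] {H : SimpleGraph U} (h2 : ∀ x, 2 ≤ d H x)
    {B : Fin 3 ⊕ Fin 3 → Finset U} (m : Model (completeBipartiteGraph (Fin 3) (Fin 3)) H B) :
    (∀ w, d (completeBipartiteGraph (Fin 3) (Fin 3)) w = 3) ∧
    ∃ r : Fin 3 ⊕ Fin 3 → U, Function.Injective r ∧ ∀ w, r w ∈ B w ∧ 3 ≤ d H (r w) := by
  classical
  have hd : ∀ w, d (completeBipartiteGraph (Fin 3) (Fin 3)) w = 3 := by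
    intro w
    rw [d]
    simp only [completeBipartiteGraph_adj]
    revert w; decide
  refine ⟨hd, ?_⟩
  have h1 : ∀ w, ∃ x, x ∈ B w ∧ 3 ≤ d H x := by
    intro w
    have h3 := m.excess h2 w
    have h4 := m.le_out w
    rw [hd] at h4
    by_contra hcon
    push Not at hcon
    have : ∑ x ∈ B w, (d H x - 2) = 0 :=
      Finset.sum_eq_zero fun x hx => by have := hcon x hx; omega
    omega
  choose r hr using h1
  exact ⟨r, fun w z h => m.disj _ _ _ (hr w).1 (h ▸ (hr z).1), hr⟩

open Classical in
theorem planar1 {U : Type*} [Fintype U] {H : SimpleGraph U} (hU : Fintype.card U = 8)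
    (h2 : ∀ x, 2 ≤ d H x) (hsum : ∑ x, (d H x - 2) ≤ 9)
    (h3 : 3 ≤ (Finset.univ.filter (fun x => d H x = 2)).card) : H.IsPlanar := by
  refine ⟨no_K5 h2 hsum, fun h => ?_⟩
  obtain ⟨B, m⟩ := exists_model h
  obtain ⟨-, r, hr, hr'⟩ := K33_rep h2 m
  have h5 : (Finset.univ.filter (fun x => ¬ d H x = 2)).card ≤ 5 := by
    have := Finset.card_filter_add_card_filter_not (s := (Finset.univ : Finset U))
      (fun x => d H x = 2)
    rw [Finset.card_univ, hU] at this
    omega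
  have h6 : (Finset.univ : Finset (Fin 3 ⊕ Fin 3)).card
      ≤ (Finset.univ.filter (fun x => ¬ d H x = 2)).card := by
    apply Finset.card_le_card_of_injOn r _ hr.injOn
    intro w _
    simp only [Finset.coe_filter, Finset.mem_univ, true_and, Set.mem_ofPred_eq]
    have := (hr' w).2
    omega
  simp at h6
  omega

open Classical in
theorem planar2 {U : Type*} [Fintype U] {H : SimpleGraph U} (hU : Fintype.card U = 8)
    (h2 : ∀ x, 2 ≤ d H x) (hsum : ∑ x, (d H x - 2) ≤ 9)
    (h3 : 2 ≤ (Finset.univ.filter (fun x => d H x = 2)).card) (u v w : U)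
    (hu : d H u = 3) (hv : d H v = 3) (huv : H.Adj u v) (hwu : H.Adj w u) (hwv : H.Adj w v) :
    H.IsPlanar := by
  refine ⟨no_K5 h2 hsum, fun h => ?_⟩
  obtain ⟨B, m⟩ := exists_model h
  obtain ⟨hd, r, hr, hr'⟩ := K33_rep h2 m
  have h5 : (Finset.univ.filter (fun x => ¬ d H x = 2)).card ≤ 6 := by
    have := Finset.card_filter_add_card_filter_not (s := (Finset.univ : Finset U))
      (fun x => d H x = 2)
    rw [Finset.card_univ, hU] at this
    omega
  have himg : Finset.univ.image r = Finset.univ.filter (fun x => ¬ d H x = 2) := by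
    apply Finset.eq_of_subset_of_card_le
    · intro x hx
      simp only [Finset.mem_image, Finset.mem_univ, true_and] at hx
      obtain ⟨z, rfl⟩ := hx
      simp only [Finset.mem_filter, Finset.mem_univ, true_and]
      have := (hr' z).2
      omega
    · rw [Finset.card_image_of_injective _ hr]
      simpa using h5
  have hall : ∀ x, d H x ≠ 2 → ∃ z, r z = x := by
    intro x hx
    have : x ∈ Finset.univ.image r := by
      rw [himg]; simpa using hx
    simpa using this
  -- the branch set of a degree three vertex has exactly three leaving edges
  have hout : ∀ z, d H (r z) = 3 → (Out H (B z)).card ≤ 3 := by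
    intro z hz
    have h := m.excess h2 z
    have : ∑ x ∈ B z, (d H x - 2) = d H (r z) - 2 := by
      apply Finset.sum_eq_single_of_mem _ (hr' z).1
      intro x hx hne
      by_contra hcon
      obtain ⟨y, rfl⟩ := hall x (by omega)
      exact hne (congrArg r (m.disj _ _ _ (hr' y).1 hx))
    omega
  obtain ⟨p, rfl⟩ := hall u (by omega)
  obtain ⟨q, rfl⟩ := hall v (by omega)
  have hpq : p ≠ q := fun h => huv.ne (congrArg r h)
  have hp := (hr' p).1
  have hq := (hr' q).1
  obtain ⟨tp, tp'⟩ := m.tight p (by rw [hd]; exact hout p hu)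
  obtain ⟨tq, tq'⟩ := m.tight q (by rw [hd]; exact hout q hv)
  have memOut : ∀ z x y, x ∈ B z → y ∉ B z → H.Adj x y → (x, y) ∈ Out H (B z) := by
    intro z x y h1 h2 h3
    simp only [Out, Finset.mem_filter, Finset.mem_univ, true_and]
    exact ⟨h1, h2, h3⟩
  have hqp : r q ∉ B p := fun h => hpq (m.disj _ _ _ h hq)
  have hpq' : r p ∉ B q := fun h => hpq (m.disj _ _ _ hp h)
  have o1 := memOut p _ _ hp hqp huv
  have o2 := memOut q _ _ hq hpq' huv.symm
  by_cases hwp : w ∈ B p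
  · have := tp' _ o1 _ (memOut p _ _ hwp hqp hwv) q hq hq
    exact hwu.ne (congrArg Prod.fst this).symm
  by_cases hwq : w ∈ B q
  · have := tq' _ o2 _ (memOut q _ _ hwq hpq' hwu) p hp hp
    exact hwv.ne (congrArg Prod.fst this).symm
  obtain ⟨z, hz, hz'⟩ := tp _ o1
  obtain rfl := m.disj _ _ _ hz' hq
  obtain ⟨s, hs, hs'⟩ := tp _ (memOut p _ _ hp hwp hwu.symm)
  obtain ⟨t, ht, ht'⟩ := tq _ (memOut z _ _ hq hwq hwv.symm)
  obtain rfl := m.disj _ _ _ hs' ht'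
  exact K33_no_triangle _ _ _ hz hs ht

/-- no connected minor on at least five vertices when components have at most four vertices -/
theorem no_minor_of_small {W U : Type*} [Fintype W] [Fintype U] {K : SimpleGraph W}
    {H : SimpleGraph U} (hK : K.Connected) (hW : 5 ≤ Fintype.card W) (S : Set U)
    (hS : ∀ x y, H.Adj x y → (x ∈ S ↔ y ∈ S)) (h1 : S.ncard ≤ 4) (h2 : Sᶜ.ncard ≤ 4) :
    ¬ K.IsMinor H := by
  classical
  intro h
  obtain ⟨B, m⟩ := exists_model h
  have hw : ∀ w, ∀ x ∈ B w, ∀ y ∈ B w, (x ∈ S ↔ y ∈ S) := by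
    intro w x hx y hy
    obtain ⟨p⟩ := (m.conn w).preconnected ⟨x, hx⟩ ⟨y, hy⟩
    have key : ∀ (a b : ((B w : Set U) : Type _)), (H.induce (B w : Set U)).Walk a b →
        ((a : U) ∈ S ↔ (b : U) ∈ S) := by
      intro a b p
      induction p with
      | nil => rfl
      | cons h _ ih => exact (hS _ _ h).trans ih
    exact key _ _ p
  have hne : ∀ w, ∃ x, x ∈ B w := fun w => by
    obtain ⟨x⟩ := (m.conn w).nonempty
    exact ⟨x.1, x.2⟩
  choose r hr using hne
  have hwz : ∀ w z, (r w ∈ S ↔ r z ∈ S) := by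
    intro w z
    obtain ⟨p⟩ := hK.preconnected w z
    induction p with
    | nil => rfl
    | cons h _ ih =>
      obtain ⟨x, hx, y, hy, hxy⟩ := m.edge _ _ h
      exact ((hw _ _ (hr _) _ hx).trans (hS _ _ hxy)).trans ((hw _ _ hy _ (hr _)).trans ih)
  have hinj : Function.Injective r := fun w z h => m.disj _ _ _ (hr w) (h ▸ hr z)
  obtain ⟨w0⟩ := hK.nonempty
  have hcard : (Set.range r).ncard = Fintype.card W := by
    rw [← Set.image_univ, Set.ncard_image_of_injective _ hinj, Set.ncard_univ,
      Nat.card_eq_fintype_card]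
  by_cases h0 : r w0 ∈ S
  · have : Set.range r ⊆ S := by
      rintro _ ⟨z, rfl⟩
      exact (hwz w0 z).1 h0
    have := Set.ncard_le_ncard this (Set.toFinite _)
    omega
  · have : Set.range r ⊆ Sᶜ := by
      rintro _ ⟨z, rfl⟩
      exact fun h => h0 ((hwz w0 z).2 h)
    have := Set.ncard_le_ncard this (Set.toFinite _)
    omega
end Search

namespace Search
theorem K33_connected : (completeBipartiteGraph (Fin 3) (Fin 3)).Connected := by
  have h : ∀ i j : Fin 3, (completeBipartiteGraph (Fin 3) (Fin 3)).Reachable (Sum.inl i) (Sum.inr j) :=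
    fun i j => SimpleGraph.Adj.reachable (by simp)
  refine ⟨?_⟩
  rintro (i | i) (j | j)
  · exact (h i 0).trans (h j 0).symm
  · exact h i j
  · exact (h j i).symm
  · exact (h 0 i).symm.trans (h 0 j)

theorem sum_split {V : Type*} [Fintype V] {a b : V} (hab : a ≠ b)
    [Fintype (({a, b}ᶜ : Set V) : Type _)] (g : V → ℕ) :
    ∑ y, g y = ∑ y : (({a, b}ᶜ : Set V) : Type _), g y + g a + g b := by
  classical
  have h1 : ∑ y : (({a, b}ᶜ : Set V) : Type _), g y = ∑ y ∈ ({a, b} : Finset V)ᶜ, g y := by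
    symm
    apply Finset.sum_subtype
    intro x
    simp
  have h2 := Finset.sum_compl_add_sum ({a, b} : Finset V) g
  rw [Finset.sum_pair hab] at h2
  omega

open Classical in
theorem d_eq_sum {U : Type*} [Fintype U] (H : SimpleGraph U) (x : U) :
    d H x = ∑ y, if H.Adj x y then 1 else 0 := by
  rw [d, Finset.card_filter]

open Classical in
/-- basic facts on the graph with two nonadjacent vertices deleted -/
theorem delete_facts {V : Type*} [Fintype V] (G : SimpleGraph V) (hV : Fintype.card V = 10)
    (hdeg : ∀ v : V, (G.neighborSet v).ncard = 4) {a b : V} (hab : a ≠ b) (hn : ¬ G.Adj a b) :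
    Fintype.card (({a, b}ᶜ : Set V) : Type _) = 8 ∧
    (∀ x : (({a, b}ᶜ : Set V) : Type _), d (G.induce ({a, b}ᶜ : Set V)) x
      + (if G.Adj a x then 1 else 0) + (if G.Adj b x then 1 else 0) = 4) ∧
    ∑ x, (d (G.induce ({a, b}ᶜ : Set V)) x - 2) = 8 := by
  have hd : ∀ v, ∑ y, (if G.Adj v y then 1 else 0) = 4 := by
    intro v
    rw [← Finset.card_filter, ← hdeg v, ← Set.ncard_coe_finset]
    congr 1
    ext y
    simp
  have h1 : Fintype.card (({a, b}ᶜ : Set V) : Type _) = 8 := by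
    have := sum_split hab (fun _ => 1)
    simp only [Finset.sum_const, Finset.card_univ, smul_eq_mul, mul_one, hV] at this
    omega
  have h2 : ∀ x : (({a, b}ᶜ : Set V) : Type _), d (G.induce ({a, b}ᶜ : Set V)) x
      + (if G.Adj a x then 1 else 0) + (if G.Adj b x then 1 else 0) = 4 := by
    intro x
    have := sum_split hab (fun y => if G.Adj x y then 1 else 0)
    rw [hd] at this
    rw [this, d_eq_sum]
    simp only [SimpleGraph.comap_adj, Function.Embedding.subtype_apply, G.adj_comm a, G.adj_comm b]
  refine ⟨h1, h2, ?_⟩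
  have ha := sum_split hab (fun y => if G.Adj a y then 1 else 0)
  have hb := sum_split hab (fun y => if G.Adj b y then 1 else 0)
  have hn' : ¬ G.Adj b a := fun h => hn h.symm
  simp only [hd, SimpleGraph.irrefl, hn, hn', if_false, add_zero] at ha hb
  have hs : ∑ x : (({a, b}ᶜ : Set V) : Type _), ((d (G.induce ({a, b}ᶜ : Set V)) x - 2)
      + (if G.Adj a x then 1 else 0) + (if G.Adj b x then 1 else 0) )
      = ∑ x : (({a, b}ᶜ : Set V) : Type _), 2 := by
    refine Finset.sum_congr rfl fun x _ => ?_
    have := h2 x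
    split_ifs at this ⊢ <;> omega
  rw [Finset.sum_add_distrib, Finset.sum_add_distrib, ← ha, ← hb, Finset.sum_const,
    Finset.card_univ, h1] at hs
  simp only [smul_eq_mul] at hs
  omega

open Classical in
theorem common_le {V : Type*} [Fintype V] (G : SimpleGraph V) (hV : Fintype.card V = 10)
    (hdeg : ∀ v : V, (G.neighborSet v).ncard = 4) {a b : V} (hab : a ≠ b) (hn : ¬ G.Adj a b) :
    (G.neighborSet a ∩ G.neighborSet b).ncard ≤
      (Finset.univ.filter (fun x => d (G.induce ({a, b}ᶜ : Set V)) x = 2)).card := by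
  obtain ⟨-, h2, -⟩ := delete_facts G hV hdeg hab hn
  rw [← Set.ncard_coe_finset, ← Set.ncard_image_of_injective _ Subtype.val_injective]
  apply Set.ncard_le_ncard _ (Set.toFinite _)
  rintro x ⟨hxa, hxb⟩
  simp only [SimpleGraph.mem_neighborSet] at hxa hxb
  refine ⟨⟨x, ?_⟩, ?_, rfl⟩
  · simp only [Set.mem_compl_iff, Set.mem_insert_iff, Set.mem_singleton_iff, not_or]
    exact ⟨hxa.ne', hxb.ne'⟩
  · have := h2 ⟨x, by
      simp only [Set.mem_compl_iff, Set.mem_insert_iff, Set.mem_singleton_iff, not_or]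
      exact ⟨hxa.ne', hxb.ne'⟩⟩
    simp only [hxa, hxb, if_true] at this
    simp only [Finset.coe_filter, Finset.mem_univ, true_and, Set.mem_ofPred_eq]
    omega

theorem apex1 {V : Type*} [Fintype V] (G : SimpleGraph V) (hV : Fintype.card V = 10)
    (hdeg : ∀ v : V, (G.neighborSet v).ncard = 4) (h : Good1 G) : G.TwoApex := by
  classical
  obtain ⟨a, b, hab, hn, h3⟩ := h
  obtain ⟨h1, h2, hs⟩ := delete_facts G hV hdeg hab hn
  refine ⟨{a, b}, (Set.ncard_pair hab).le, planar1 h1 (fun x => ?_) (by omega)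
    (h3.trans (common_le G hV hdeg hab hn))⟩
  have := h2 x
  split_ifs at this <;> omega

theorem apex2 {V : Type*} [Fintype V] (G : SimpleGraph V) (hV : Fintype.card V = 10)
    (hdeg : ∀ v : V, (G.neighborSet v).ncard = 4) (h : Good2 G) : G.TwoApex := by
  classical
  obtain ⟨a, b, hab, hn, h3, u, w, x, huw, hxa, hxb, hxu, hxw, hu, hw⟩ := h
  obtain ⟨h1, h2, hs⟩ := delete_facts G hV hdeg hab hn
  have hn' : ¬ G.Adj b a := fun h => hn h.symm
  have mem : ∀ y, ((G.Adj a y ∧ ¬ G.Adj b y) ∨ (¬ G.Adj a y ∧ G.Adj b y)) →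
      y ∈ ({a, b}ᶜ : Set V) := by
    intro y hy
    simp only [Set.mem_compl_iff, Set.mem_insert_iff, Set.mem_singleton_iff, not_or]
    constructor
    · rintro rfl
      simp [hn'] at hy
    · rintro rfl
      simp [hn] at hy
  have deg3 : ∀ y (hy : (G.Adj a y ∧ ¬ G.Adj b y) ∨ (¬ G.Adj a y ∧ G.Adj b y)),
      d (G.induce ({a, b}ᶜ : Set V)) ⟨y, mem y hy⟩ = 3 := by
    intro y hy
    have := h2 ⟨y, mem y hy⟩
    rcases hy with hy | hy <;> simp only [hy.1, hy.2, if_true, if_false] at this <;> omega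
  have hx : x ∈ ({a, b}ᶜ : Set V) := by simp [hxa, hxb]
  refine ⟨{a, b}, (Set.ncard_pair hab).le, planar2 h1 (fun x => ?_) (by omega)
    (h3.trans (common_le G hV hdeg hab hn)) ⟨u, mem u hu⟩ ⟨w, mem w hw⟩ ⟨x, hx⟩
    (deg3 u hu) (deg3 w hw) huw hxu hxw⟩
  have := h2 x
  split_ifs at this <;> omega

theorem apex3 {V : Type*} [Fintype V] (G : SimpleGraph V) (hV : Fintype.card V = 10)
    (hdeg : ∀ v : V, (G.neighborSet v).ncard = 4) (h : Good3 G) : G.TwoApex := by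
  classical
  obtain ⟨c, hc⟩ := h
  have hinj : Function.Injective c := by
    intro i j h
    by_contra hne
    exact (hc i j hne).ne h
  have hcard : (Set.range c).ncard = 5 := by
    rw [← Set.image_univ, Set.ncard_image_of_injective _ hinj, Set.ncard_univ]
    simp
  have hclosed : ∀ x y, x ∈ Set.range c → G.Adj x y → y ∈ Set.range c := by
    rintro _ y ⟨i, rfl⟩ hy
    have hsub : Set.range c \ {c i} ⊆ G.neighborSet (c i) := by
      rintro _ ⟨⟨j, rfl⟩, hj⟩
      exact hc i j fun h => hj (by rw [h]; rfl)
    have heq := Set.eq_of_subset_of_ncard_le hsub (by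
      rw [hdeg, Set.ncard_sdiff_singleton_of_mem (Set.mem_range_self i), hcard]) (Set.toFinite _)
    have : y ∈ G.neighborSet (c i) := hy
    rw [← heq] at this
    exact this.1
  have hcompl := Set.ncard_add_ncard_compl (Set.range c)
  rw [hcard, Nat.card_eq_fintype_card, hV] at hcompl
  obtain ⟨b, hb⟩ : (Set.range c)ᶜ.Nonempty := by
    rw [← Set.ncard_pos (Set.toFinite _)]; omega
  have hab : c 0 ≠ b := fun h => hb ⟨0, h⟩
  let S : Set (({c 0, b}ᶜ : Set V) : Type _) := {x | (x : V) ∈ Set.range c}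
  have hS : ∀ x y, (G.induce ({c 0, b}ᶜ : Set V)).Adj x y → (x ∈ S ↔ y ∈ S) :=
    fun x y h => ⟨fun hx => hclosed _ _ hx h, fun hy => hclosed _ _ hy h.symm⟩
  have h1 : S.ncard ≤ 4 := by
    rw [← Set.ncard_image_of_injective _ Subtype.val_injective]
    have : Subtype.val '' S ⊆ Set.range c \ {c 0} := by
      rintro _ ⟨x, hx, rfl⟩
      exact ⟨hx, fun h => x.2 (Or.inl h)⟩
    have := Set.ncard_le_ncard this (Set.toFinite _)
    rw [Set.ncard_sdiff_singleton_of_mem (Set.mem_range_self 0), hcard] at this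
    exact this
  have h2 : Sᶜ.ncard ≤ 4 := by
    rw [← Set.ncard_image_of_injective _ Subtype.val_injective]
    have : Subtype.val '' Sᶜ ⊆ (Set.range c)ᶜ \ {b} := by
      rintro _ ⟨x, hx, rfl⟩
      exact ⟨hx, fun h => x.2 (Or.inr h)⟩
    have := Set.ncard_le_ncard this (Set.toFinite _)
    rw [Set.ncard_sdiff_singleton_of_mem hb] at this
    omega
  exact ⟨{c 0, b}, (Set.ncard_pair hab).le,
    no_minor_of_small SimpleGraph.connected_top (by simp) S hS h1 h2,
    no_minor_of_small K33_connected (by simp) S hS h1 h2⟩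
end Search

/-- A graph with 10 vertices and 20 edges in which every vertex has degree exactly 4
is 2-apex. -/
theorem stmt12 {V : Type*} [Fintype V] (G : SimpleGraph V)
    (hV : Fintype.card V = 10) (hE : G.edgeSet.ncard = 20)
    (hdeg : ∀ v : V, (G.neighborSet v).ncard = 4) :
    G.TwoApex := by
  rcases Search.good G hV hdeg with h | h | h
  · exact Search.apex1 G hV hdeg h
  · exact Search.apex2 G hV hdeg h
  · exact Search.apex3 G hV hdeg h
end
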